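/- arXiv:2110.09921 — 6 statements merged into one kernel-verified Lean document; each statement's English description precedes it below -/
import Mathlib

section
/- Every deduction in the system I can be converted into a deduction in normal form; precisely: for every deduction in I of a formula A whose undischarged assumptions are among Γ, there exists a deduction in I of A in normal form whose undischarged assumptions are among Γ. -/
set_option autoImplicit false

/-- Formulas of intuitionistic propositional logic: atomic formulas (indexed by
natural numbers), `⊥` (`falsum`), conjunction, disjunction and implication.
Following the paper, `⊥` is a (nullary) connective and not an atomic formula. -/
inductive Formula : Type
  | atom : ℕ → Formula
  | falsum : Formula
  | and : Formula → Formula → Formula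
  | or : Formula → Formula → Formula
  | imp : Formula → Formula → Formula
  deriving DecidableEq

/-- Deductions in Negri and von Plato's system **I** of intuitionistic
propositional logic with general introduction and elimination rules, indexed by
their conclusion.  Each constructor corresponds to a rule of the system:

* `ass A` : the one-formula deduction of `A` from the open assumption `A`;
* `andI d₁ d₂ d₃` : from deductions `d₁` of `A`, `d₂` of `B` (the specific
  premises) and a deduction `d₃` of `C` (the arbitrary premise) in which
  assumptions of the form `A ∧ B` may be discharged, infer `C`;
* `impI A d₁ d₂` : from a deduction `d₁` of `B` in which assumptions `A` may be
  discharged and a deduction `d₂` of `C` in which assumptions `A ⊃ B` may be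
  discharged, infer `C`;
* `orI₁ B d₁ d₂` / `orI₂ A d₁ d₂` : from a deduction of `A` (respectively of
  `B`) and a deduction of `C` in which assumptions `A ∨ B` may be discharged,
  infer `C`;
* `andE d₁ d₂` : from a deduction of the major premise `A ∧ B` and a deduction
  of `C` in which assumptions `A` and `B` may be discharged, infer `C`;
* `impE d₁ d₂ d₃` : from a deduction of the major premise `A ⊃ B`, a deduction
  of the minor premise `A`, and a deduction of `C` in which assumptions `B`
  may be discharged, infer `C`;
* `orE d₁ d₂ d₃` : from a deduction of the major premise `A ∨ B` and two
  deductions of `C` in which assumptions `A`, respectively `B`, may be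
  discharged, infer `C`;
* `falsumE d` : from a deduction of `⊥` infer any `C`.

Discharge is recorded by the function `hyps` below: a rule application
discharges all open occurrences of the indicated formulas in the indicated
subdeductions. -/
inductive Ded : Formula → Type
  | ass (A : Formula) : Ded A
  | andI {A B C : Formula} (d₁ : Ded A) (d₂ : Ded B) (d₃ : Ded C) : Ded C
  | impI (A : Formula) {B C : Formula} (d₁ : Ded B) (d₂ : Ded C) : Ded C
  | orI₁ {A : Formula} (B : Formula) {C : Formula} (d₁ : Ded A) (d₂ : Ded C) : Ded C
  | orI₂ (A : Formula) {B C : Formula} (d₁ : Ded B) (d₂ : Ded C) : Ded C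
  | andE {A B C : Formula} (d₁ : Ded (Formula.and A B)) (d₂ : Ded C) : Ded C
  | impE {A B C : Formula} (d₁ : Ded (Formula.imp A B)) (d₂ : Ded A) (d₃ : Ded C) : Ded C
  | orE {A B C : Formula} (d₁ : Ded (Formula.or A B)) (d₂ : Ded C) (d₃ : Ded C) : Ded C
  | falsumE {C : Formula} (d : Ded Formula.falsum) : Ded C

/-- The set of undischarged (open) assumptions of a deduction. -/
def hyps : ∀ {C : Formula}, Ded C → Set Formula
  | _, .ass A => {A}
  | _, @Ded.andI A B _ d₁ d₂ d₃ => hyps d₁ ∪ hyps d₂ ∪ (hyps d₃ \ {Formula.and A B})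
  | _, @Ded.impI A B _ d₁ d₂ => (hyps d₁ \ {A}) ∪ (hyps d₂ \ {Formula.imp A B})
  | _, @Ded.orI₁ A B _ d₁ d₂ => hyps d₁ ∪ (hyps d₂ \ {Formula.or A B})
  | _, @Ded.orI₂ A B _ d₁ d₂ => hyps d₁ ∪ (hyps d₂ \ {Formula.or A B})
  | _, @Ded.andE A B _ d₁ d₂ => hyps d₁ ∪ (hyps d₂ \ {A, B})
  | _, @Ded.impE _ B _ d₁ d₂ d₃ => hyps d₁ ∪ hyps d₂ ∪ (hyps d₃ \ {B})
  | _, @Ded.orE A B _ d₁ d₂ d₃ => hyps d₁ ∪ (hyps d₂ \ {A}) ∪ (hyps d₃ \ {B})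
  | _, .falsumE d => hyps d
/-- `d.isAss` holds iff `d` is a one-formula deduction, i.e. an assumption. -/
def Ded.isAss : ∀ {C : Formula}, Ded C → Bool
  | _, .ass _ => true
  | _, _ => false

/-- `MajorOpen F d` : somewhere in `d` there is an occurrence of the formula
`F` as an assumption (a leaf of the tree) that is the major premise of an
application of an elimination rule, and this occurrence is not discharged
within `d` (so that it can be discharged by a rule applied below `d`). -/
def MajorOpen (F : Formula) : ∀ {C : Formula}, Ded C → Prop
  | _, .ass _ => False
  | _, @Ded.andI A B _ d₁ d₂ d₃ =>
      MajorOpen F d₁ ∨ MajorOpen F d₂ ∨ (MajorOpen F d₃ ∧ F ≠ Formula.and A B)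
  | _, @Ded.impI A B _ d₁ d₂ =>
      (MajorOpen F d₁ ∧ F ≠ A) ∨ (MajorOpen F d₂ ∧ F ≠ Formula.imp A B)
  | _, @Ded.orI₁ A B _ d₁ d₂ =>
      MajorOpen F d₁ ∨ (MajorOpen F d₂ ∧ F ≠ Formula.or A B)
  | _, @Ded.orI₂ A B _ d₁ d₂ =>
      MajorOpen F d₁ ∨ (MajorOpen F d₂ ∧ F ≠ Formula.or A B)
  | _, @Ded.andE A B _ d₁ d₂ =>
      (F = Formula.and A B ∧ d₁.isAss = true) ∨ MajorOpen F d₁ ∨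
        (MajorOpen F d₂ ∧ F ≠ A ∧ F ≠ B)
  | _, @Ded.impE A B _ d₁ d₂ d₃ =>
      (F = Formula.imp A B ∧ d₁.isAss = true) ∨ MajorOpen F d₁ ∨ MajorOpen F d₂ ∨
        (MajorOpen F d₃ ∧ F ≠ B)
  | _, @Ded.orE A B _ d₁ d₂ d₃ =>
      (F = Formula.or A B ∧ d₁.isAss = true) ∨ MajorOpen F d₁ ∨
        (MajorOpen F d₂ ∧ F ≠ A) ∨ (MajorOpen F d₃ ∧ F ≠ B)
  | _, @Ded.falsumE _ d => (F = Formula.falsum ∧ d.isAss = true) ∨ MajorOpen F d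

/-- `HasMaxFormula d` : the deduction `d` contains a maximal formula, i.e. an
occurrence of a formula `A ∗ B` that is at the same time the major premise of
an application of `∗E` and the major assumption discharged by an application of
`∗I`. -/
def HasMaxFormula : ∀ {C : Formula}, Ded C → Prop
  | _, .ass _ => False
  | _, @Ded.andI A B _ d₁ d₂ d₃ =>
      MajorOpen (Formula.and A B) d₃ ∨ HasMaxFormula d₁ ∨ HasMaxFormula d₂ ∨ HasMaxFormula d₃
  | _, @Ded.impI A B _ d₁ d₂ =>
      MajorOpen (Formula.imp A B) d₂ ∨ HasMaxFormula d₁ ∨ HasMaxFormula d₂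
  | _, @Ded.orI₁ A B _ d₁ d₂ =>
      MajorOpen (Formula.or A B) d₂ ∨ HasMaxFormula d₁ ∨ HasMaxFormula d₂
  | _, @Ded.orI₂ A B _ d₁ d₂ =>
      MajorOpen (Formula.or A B) d₂ ∨ HasMaxFormula d₁ ∨ HasMaxFormula d₂
  | _, .andE d₁ d₂ => HasMaxFormula d₁ ∨ HasMaxFormula d₂
  | _, .impE d₁ d₂ d₃ => HasMaxFormula d₁ ∨ HasMaxFormula d₂ ∨ HasMaxFormula d₃
  | _, .orE d₁ d₂ d₃ => HasMaxFormula d₁ ∨ HasMaxFormula d₂ ∨ HasMaxFormula d₃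
  | _, .falsumE d => HasMaxFormula d

/-- The root rule application of `d` has an arbitrary premise; equivalently,
the conclusion of `d` is immediately preceded by an arbitrary premise of the
same shape, so that the conclusion of `d` is the last formula of a segment
(a sequence of occurrences of the same formula each of which is an arbitrary
premise of an application of a rule whose conclusion is the next one). -/
def Ded.endsWithArbitrary : ∀ {C : Formula}, Ded C → Prop
  | _, .ass _ => False
  | _, .falsumE _ => False
  | _, _ => True

/-- `HasMaxSegment d` : the deduction `d` contains a maximal segment, i.e. a
segment (of length `> 1`) whose last formula is the major premise of an
application of an elimination rule.  Since the first formula of a segment is an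
arbitrary premise and each later formula is the conclusion of a rule applied to
an arbitrary premise, this happens exactly when the major premise of some
elimination rule application in `d` is the conclusion of a rule application
that has an arbitrary premise. -/
def HasMaxSegment : ∀ {C : Formula}, Ded C → Prop
  | _, .ass _ => False
  | _, .andI d₁ d₂ d₃ => HasMaxSegment d₁ ∨ HasMaxSegment d₂ ∨ HasMaxSegment d₃
  | _, .impI _ d₁ d₂ => HasMaxSegment d₁ ∨ HasMaxSegment d₂
  | _, .orI₁ _ d₁ d₂ => HasMaxSegment d₁ ∨ HasMaxSegment d₂
  | _, .orI₂ _ d₁ d₂ => HasMaxSegment d₁ ∨ HasMaxSegment d₂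
  | _, .andE d₁ d₂ => d₁.endsWithArbitrary ∨ HasMaxSegment d₁ ∨ HasMaxSegment d₂
  | _, .impE d₁ d₂ d₃ =>
      d₁.endsWithArbitrary ∨ HasMaxSegment d₁ ∨ HasMaxSegment d₂ ∨ HasMaxSegment d₃
  | _, .orE d₁ d₂ d₃ =>
      d₁.endsWithArbitrary ∨ HasMaxSegment d₁ ∨ HasMaxSegment d₂ ∨ HasMaxSegment d₃
  | _, .falsumE d => d.endsWithArbitrary ∨ HasMaxSegment d

/-- A deduction is in normal form if it contains neither maximal formulas nor
maximal segments. -/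
def NormalForm {C : Formula} (d : Ded C) : Prop := ¬ HasMaxFormula d ∧ ¬ HasMaxSegment d

/-!
The proof is semantic. Formulas are interpreted in a Kripke model whose worlds are sets of
assumptions ordered by inclusion, with atoms interpreted by normal derivability. Every
deduction is sound for this model; a world forces each of its own members, and whatever a world
forces is normally derivable from it. Only two shapes of rule application are needed to build
these normal deductions: eliminations whose major premise is an assumption, and introductions
whose arbitrary premise is the very assumption that they discharge. Disjunction and falsity
eliminate into arbitrary formulas, so they are interpreted not at the world itself but up to
covers, as in Beth semantics.
-/

namespace NormalForm

variable {A B C : Formula}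

theorem ass (A : Formula) : NormalForm (.ass A) := by
  simp [NormalForm, HasMaxFormula, HasMaxSegment]

theorem andI_ass {d₁ : Ded A} {d₂ : Ded B} (h₁ : NormalForm d₁) (h₂ : NormalForm d₂) :
    NormalForm (.andI d₁ d₂ (.ass (.and A B))) := by
  simp_all [NormalForm, HasMaxFormula, HasMaxSegment, MajorOpen]

theorem impI_ass {d : Ded B} (h : NormalForm d) :
    NormalForm (.impI A d (.ass (.imp A B))) := by
  simp_all [NormalForm, HasMaxFormula, HasMaxSegment, MajorOpen]

theorem orI₁_ass {d : Ded A} (h : NormalForm d) :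
    NormalForm (.orI₁ B d (.ass (.or A B))) := by
  simp_all [NormalForm, HasMaxFormula, HasMaxSegment, MajorOpen]

theorem orI₂_ass {d : Ded B} (h : NormalForm d) :
    NormalForm (.orI₂ A d (.ass (.or A B))) := by
  simp_all [NormalForm, HasMaxFormula, HasMaxSegment, MajorOpen]

theorem andE_ass {d : Ded C} (h : NormalForm d) :
    NormalForm (.andE (.ass (.and A B)) d) := by
  simp_all [NormalForm, HasMaxFormula, HasMaxSegment, Ded.endsWithArbitrary]

theorem impE_ass {d₁ : Ded A} {d₂ : Ded C} (h₁ : NormalForm d₁) (h₂ : NormalForm d₂) :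
    NormalForm (.impE (.ass (.imp A B)) d₁ d₂) := by
  simp_all [NormalForm, HasMaxFormula, HasMaxSegment, Ded.endsWithArbitrary]

theorem orE_ass {d₁ d₂ : Ded C} (h₁ : NormalForm d₁) (h₂ : NormalForm d₂) :
    NormalForm (.orE (.ass (.or A B)) d₁ d₂) := by
  simp_all [NormalForm, HasMaxFormula, HasMaxSegment, Ded.endsWithArbitrary]

theorem falsumE_ass (C : Formula) : NormalForm (.falsumE (C := C) (.ass .falsum)) := by
  simp [NormalForm, HasMaxFormula, HasMaxSegment, Ded.endsWithArbitrary]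

end NormalForm

/-- `Γ ⊢ₙ C`: some deduction of `C` in normal form has all its open assumptions in `Γ`. -/
def NormallyDerivable (Γ : Set Formula) (C : Formula) : Prop :=
  ∃ d : Ded C, hyps d ⊆ Γ ∧ NormalForm d

infix:50 " ⊢ₙ " => NormallyDerivable

namespace NormallyDerivable

variable {Γ Δ : Set Formula} {A B C : Formula}

theorem mono (hΓΔ : Γ ⊆ Δ) : Γ ⊢ₙ C → Δ ⊢ₙ C :=
  fun ⟨d, hd, nd⟩ => ⟨d, hd.trans hΓΔ, nd⟩

theorem of_mem (h : A ∈ Γ) : Γ ⊢ₙ A :=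
  ⟨.ass A, Set.singleton_subset_iff.2 h, .ass A⟩

theorem and_intro : Γ ⊢ₙ A → Γ ⊢ₙ B → Γ ⊢ₙ .and A B :=
  fun ⟨d₁, hd₁, nd₁⟩ ⟨d₂, hd₂, nd₂⟩ =>
    ⟨.andI d₁ d₂ (.ass (.and A B)), by simp [hyps, hd₁, hd₂], nd₁.andI_ass nd₂⟩

theorem imp_intro : insert A Γ ⊢ₙ B → Γ ⊢ₙ .imp A B :=
  fun ⟨d, hd, nd⟩ => ⟨.impI A d (.ass (.imp A B)), by simp [hyps, hd], nd.impI_ass⟩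

theorem or_inl : Γ ⊢ₙ A → Γ ⊢ₙ .or A B :=
  fun ⟨d, hd, nd⟩ => ⟨.orI₁ B d (.ass (.or A B)), by simp [hyps, hd], nd.orI₁_ass⟩

theorem or_inr : Γ ⊢ₙ B → Γ ⊢ₙ .or A B :=
  fun ⟨d, hd, nd⟩ => ⟨.orI₂ A d (.ass (.or A B)), by simp [hyps, hd], nd.orI₂_ass⟩

theorem and_elim (h : .and A B ∈ Γ) : {A, B} ∪ Γ ⊢ₙ C → Γ ⊢ₙ C :=
  fun ⟨d, hd, nd⟩ => ⟨.andE (.ass (.and A B)) d,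
    Set.union_subset (Set.singleton_subset_iff.2 h) (Set.sdiff_subset_iff.2 hd), nd.andE_ass⟩

theorem imp_elim (h : .imp A B ∈ Γ) : Γ ⊢ₙ A → insert B Γ ⊢ₙ C → Γ ⊢ₙ C :=
  fun ⟨d₁, hd₁, nd₁⟩ ⟨d₂, hd₂, nd₂⟩ => ⟨.impE (.ass (.imp A B)) d₁ d₂,
    Set.union_subset (Set.union_subset (Set.singleton_subset_iff.2 h) hd₁)
      (Set.sdiff_singleton_subset_iff.2 hd₂), nd₁.impE_ass nd₂⟩

theorem or_elim (h : .or A B ∈ Γ) : insert A Γ ⊢ₙ C → insert B Γ ⊢ₙ C → Γ ⊢ₙ C :=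
  fun ⟨d₁, hd₁, nd₁⟩ ⟨d₂, hd₂, nd₂⟩ => ⟨.orE (.ass (.or A B)) d₁ d₂,
    Set.union_subset (Set.union_subset (Set.singleton_subset_iff.2 h)
      (Set.sdiff_singleton_subset_iff.2 hd₁)) (Set.sdiff_singleton_subset_iff.2 hd₂),
    nd₁.orE_ass nd₂⟩

theorem falsum_elim (h : .falsum ∈ Γ) : Γ ⊢ₙ C :=
  ⟨.falsumE (.ass .falsum), Set.singleton_subset_iff.2 h, .falsumE_ass C⟩

end NormallyDerivable

/-- `Cover P Γ`: the extensions of `Γ` satisfying `P` cover `Γ`, in the sense that any formula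
normally derivable from all of them is already normally derivable from `Γ`; the same is required of
each extension `Δ` of `Γ`. This encodes the covers of Beth semantics by their elimination principle
(the continuation monad with answers in normal derivability). -/
def Cover (P : Set Formula → Prop) (Γ : Set Formula) : Prop :=
  ∀ Δ, Γ ⊆ Δ → ∀ C, (∀ Θ, Δ ⊆ Θ → P Θ → Θ ⊢ₙ C) → Δ ⊢ₙ C

namespace Cover

variable {P Q : Set Formula → Prop} {Γ Δ : Set Formula} {A B C : Formula}

theorem mono (hΓΔ : Γ ⊆ Δ) (h : Cover P Γ) : Cover P Δ :=
  fun Θ hΔΘ => h Θ (hΓΔ.trans hΔΘ)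

theorem imp (h : Cover P Γ) (hPQ : ∀ Δ, Γ ⊆ Δ → P Δ → Q Δ) : Cover Q Γ :=
  fun Δ hΓΔ C hQ => h Δ hΓΔ C fun Θ hΔΘ hP => hQ Θ hΔΘ (hPQ Θ (hΓΔ.trans hΔΘ) hP)

theorem of_forall (h : ∀ Δ, Γ ⊆ Δ → P Δ) : Cover P Γ :=
  fun Δ hΓΔ _ hP => hP Δ subset_rfl (h Δ hΓΔ)

theorem join (h : Cover (Cover P) Γ) : Cover P Γ :=
  fun Δ hΓΔ C hP => h Δ hΓΔ C fun Θ hΔΘ hΘ =>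
    hΘ Θ subset_rfl C fun Ξ hΘΞ => hP Ξ (hΔΘ.trans hΘΞ)

theorem normallyDerivable (h : Cover (· ⊢ₙ C) Γ) : Γ ⊢ₙ C :=
  h Γ subset_rfl C fun _ _ hC => hC

theorem of_and_mem (h : .and A B ∈ Γ) : Cover (fun Δ => A ∈ Δ ∧ B ∈ Δ) Γ :=
  fun _ hΓΔ _ hC => .and_elim (hΓΔ h) (hC _ Set.subset_union_right (by simp))

theorem of_imp_mem (h : .imp A B ∈ Γ) (hA : Γ ⊢ₙ A) : Cover (B ∈ ·) Γ :=
  fun Δ hΓΔ _ hC => .imp_elim (hΓΔ h) (hA.mono hΓΔ)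
    (hC _ (Set.subset_insert B Δ) (Set.mem_insert B Δ))

theorem of_or_mem (h : .or A B ∈ Γ) : Cover (fun Δ => A ∈ Δ ∨ B ∈ Δ) Γ :=
  fun Δ hΓΔ _ hC => .or_elim (hΓΔ h)
    (hC _ (Set.subset_insert A Δ) (.inl (Set.mem_insert A Δ)))
    (hC _ (Set.subset_insert B Δ) (.inr (Set.mem_insert B Δ)))

theorem of_falsum_mem (h : .falsum ∈ Γ) : Cover (fun _ => False) Γ :=
  fun _ hΓΔ _ _ => .falsum_elim (hΓΔ h)

end Cover

/-- `Γ ⊩ A`: the world `Γ` forces `A` in the Kripke model of sets of assumptions ordered by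
inclusion. Disjunction and falsity are forced only up to a cover. -/
def Forces : Set Formula → Formula → Prop
  | Γ, .atom n => Γ ⊢ₙ .atom n
  | Γ, .falsum => Cover (fun _ => False) Γ
  | Γ, .and A B => Forces Γ A ∧ Forces Γ B
  | Γ, .or A B => Cover (fun Δ => Forces Δ A ∨ Forces Δ B) Γ
  | Γ, .imp A B => ∀ Δ, Γ ⊆ Δ → Forces Δ A → Forces Δ B

infix:50 " ⊩ " => Forces

namespace Forces

variable {Γ Δ : Set Formula} {A B C : Formula}

theorem mono (hΓΔ : Γ ⊆ Δ) (h : Γ ⊩ A) : Δ ⊩ A := by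
  induction A with
  | atom n => exact NormallyDerivable.mono hΓΔ h
  | falsum => exact Cover.mono hΓΔ h
  | and A B ihA ihB => exact ⟨ihA h.1, ihB h.2⟩
  | or A B => exact Cover.mono hΓΔ h
  | imp A B => exact fun Θ hΔΘ => h Θ (hΓΔ.trans hΔΘ)

theorem of_cover (h : Cover (· ⊩ A) Γ) : Γ ⊩ A := by
  induction A generalizing Γ with
  | atom n => exact h.normallyDerivable
  | falsum => exact h.join
  | and A B ihA ihB => exact ⟨ihA (h.imp fun _ _ => And.left), ihB (h.imp fun _ _ => And.right)⟩
  | or A B => exact h.join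
  | imp A B _ ihB =>
    exact fun Δ hΓΔ hA => ihB ((h.mono hΓΔ).imp fun Θ hΔΘ hAB => hAB Θ subset_rfl (hA.mono hΔΘ))

theorem or_inl (h : Γ ⊩ A) : Γ ⊩ .or A B :=
  Cover.of_forall fun _ hΓΔ => .inl (h.mono hΓΔ)

theorem or_inr (h : Γ ⊩ B) : Γ ⊩ .or A B :=
  Cover.of_forall fun _ hΓΔ => .inr (h.mono hΓΔ)

/- The two halves are proved together because an implication is contravariant in its antecedent:
each half for `A ⊃ B` uses the other one for `A`. -/
theorem normallyDerivable_and_of_mem (A : Formula) :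
    (∀ Γ, Γ ⊩ A → Γ ⊢ₙ A) ∧ ∀ Γ : Set Formula, A ∈ Γ → Γ ⊩ A := by
  induction A with
  | atom n => exact ⟨fun _ h => h, fun _ h => .of_mem h⟩
  | falsum =>
    exact ⟨fun _ h => (h.imp fun _ _ => False.elim).normallyDerivable,
      fun _ h => Cover.of_falsum_mem h⟩
  | and A B ihA ihB =>
    refine ⟨fun Γ h => (ihA.1 Γ h.1).and_intro (ihB.1 Γ h.2), fun Γ h => ⟨?_, ?_⟩⟩
    · exact of_cover ((Cover.of_and_mem h).imp fun Δ _ hAB => ihA.2 Δ hAB.1)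
    · exact of_cover ((Cover.of_and_mem h).imp fun Δ _ hAB => ihB.2 Δ hAB.2)
  | or A B ihA ihB =>
    constructor
    · exact fun Γ h => Cover.normallyDerivable <| Cover.imp h fun Δ _ hAB =>
        hAB.elim (fun hA => (ihA.1 Δ hA).or_inl) (fun hB => (ihB.1 Δ hB).or_inr)
    · exact fun Γ h => (Cover.of_or_mem h).imp fun Δ _ => Or.imp (ihA.2 Δ) (ihB.2 Δ)
  | imp A B ihA ihB =>
    constructor
    · intro Γ h
      have hA : insert A Γ ⊩ A := ihA.2 _ (Set.mem_insert A Γ)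
      exact (ihB.1 _ (h _ (Set.subset_insert A Γ) hA)).imp_intro
    · intro Γ h Δ hΓΔ hA
      exact of_cover ((Cover.of_imp_mem (hΓΔ h) (ihA.1 Δ hA)).imp fun Θ _ => ihB.2 Θ)

theorem normallyDerivable (h : Γ ⊩ A) : Γ ⊢ₙ A :=
  (normallyDerivable_and_of_mem A).1 Γ h

theorem of_mem (h : A ∈ Γ) : Γ ⊩ A :=
  (normallyDerivable_and_of_mem A).2 Γ h

theorem of_ded (d : Ded C) (h : hyps d ⊆ {F | Γ ⊩ F}) : Γ ⊩ C := by
  induction d generalizing Γ <;>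
    simp only [hyps, Set.union_subset_iff, Set.sdiff_subset_iff, Set.singleton_union] at h
  case ass => exact Set.singleton_subset_iff.1 h
  case andI ih₁ ih₂ ih₃ =>
    obtain ⟨⟨h₁, h₂⟩, h₃⟩ := h
    exact ih₃ (h₃.trans (Set.insert_subset ⟨ih₁ h₁, ih₂ h₂⟩ subset_rfl))
  case impI A B _ _ _ ih₁ ih₂ =>
    obtain ⟨h₁, h₂⟩ := h
    have hAB : Γ ⊩ .imp A B := fun Δ hΓΔ hA =>
      ih₁ (h₁.trans (Set.insert_subset hA fun _ hF => hF.mono hΓΔ))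
    exact ih₂ (h₂.trans (Set.insert_subset hAB subset_rfl))
  case orI₁ ih₁ ih₂ =>
    obtain ⟨h₁, h₂⟩ := h
    exact ih₂ (h₂.trans (Set.insert_subset (ih₁ h₁).or_inl subset_rfl))
  case orI₂ ih₁ ih₂ =>
    obtain ⟨h₁, h₂⟩ := h
    exact ih₂ (h₂.trans (Set.insert_subset (ih₁ h₁).or_inr subset_rfl))
  case andE ih₁ ih₂ =>
    obtain ⟨h₁, h₂⟩ := h
    obtain ⟨hA, hB⟩ := ih₁ h₁
    exact ih₂ (h₂.trans (Set.union_subset (Set.pair_subset hA hB) subset_rfl))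
  case impE ih₁ ih₂ ih₃ =>
    obtain ⟨⟨h₁, h₂⟩, h₃⟩ := h
    exact ih₃ (h₃.trans (Set.insert_subset (ih₁ h₁ Γ subset_rfl (ih₂ h₂)) subset_rfl))
  case orE ih₁ ih₂ ih₃ =>
    obtain ⟨⟨h₁, h₂⟩, h₃⟩ := h
    refine of_cover (Cover.imp (ih₁ h₁) fun Δ hΓΔ hAB => ?_)
    rcases hAB with hA | hB
    · exact ih₂ (h₂.trans (Set.insert_subset hA fun _ hF => hF.mono hΓΔ))
    · exact ih₃ (h₃.trans (Set.insert_subset hB fun _ hF => hF.mono hΓΔ))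
  case falsumE ih => exact of_cover (Cover.imp (ih h) fun _ _ => False.elim)

end Forces

/-- **Normalisation for I** (Theorem 1 of the paper): every deduction in the
system I can be converted into a deduction in normal form.  Precisely: for
every deduction in I of a formula `A` whose undischarged assumptions are among
`Γ`, there exists a deduction in I of `A` in normal form whose undischarged
assumptions are among `Γ`. -/
theorem normalisation (Γ : Set Formula) (A : Formula) (d : Ded A) (hd : hyps d ⊆ Γ) :
    ∃ d' : Ded A, hyps d' ⊆ Γ ∧ NormalForm d' := by
  have hΓ : Γ ⊩ A := .of_ded d fun _ hF => .of_mem (hd hF)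
  exact hΓ.normallyDerivable
end

section
/- If Γ ⊢_I A, then there is a deduction in normal form with an occurrence of A as the conclusion and occurrences of some of the formulas in Γ as the undischarged assumptions. -/
/-!
Okada's algebraic cut elimination, with normal deductions in place of cut-free ones. Regard a
formula `A` in two ways as a set of contexts: `assumed A`, the contexts containing `A`, and
`normal A`, those from which `A` has a normal deduction. The rules whose major premise is an
assumption make these two a lower and an upper semivaluation in the Heyting algebra of stable sets
of contexts, so the honest interpretation of `A` in that algebra lies between them. Every deduction
is sound for this interpretation; hence a context from which `A` is deducible belongs to
`normal A`.
-/

set_option autoImplicit false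

/-- `Γ ⊢_I A` : there is a deduction in I of `A` all of whose undischarged
assumptions belong to `Γ`. -/
def Provable (Γ : Set Formula) (A : Formula) : Prop := ∃ d : Ded A, hyps d ⊆ Γ

open Set OrderDual

theorem forall_mem_le_of_diff {ι α : Type*} [Preorder α] {f : ι → α} {s t : Set ι}
    {a b : α} (hba : b ≤ a) (hs : ∀ i ∈ s \ t, a ≤ f i) (ht : ∀ i ∈ t, b ≤ f i) :
    ∀ i ∈ s, b ≤ f i := by
  intro i hi
  by_cases hit : i ∈ t
  · exact ht i hit
  · exact hba.trans (hs i ⟨hi, hit⟩)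

theorem forall_mem_le_of_diff_singleton {ι α : Type*} [Preorder α] {f : ι → α}
    {s : Set ι} {i : ι} {a b : α} (hba : b ≤ a) (hs : ∀ j ∈ s \ {i}, a ≤ f j) (hi : b ≤ f i) :
    ∀ j ∈ s, b ≤ f j :=
  forall_mem_le_of_diff hba hs (by simpa using hi)

section Semantics

variable {H : Type*} [HeytingAlgebra H]

/-- The value of a formula in a Heyting algebra under a valuation `v` of the atoms. -/
def Formula.eval (v : ℕ → H) : Formula → H
  | .atom n => v n
  | .falsum => ⊥
  | .and A B => A.eval v ⊓ B.eval v
  | .or A B => A.eval v ⊔ B.eval v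
  | .imp A B => A.eval v ⇨ B.eval v

theorem Ded.le_eval (v : ℕ → H) {C : Formula} (d : Ded C) {a : H}
    (ha : ∀ X ∈ hyps d, a ≤ X.eval v) : a ≤ C.eval v := by
  induction d generalizing a with
    simp only [hyps, mem_union, or_imp, forall_and] at ha
  | ass A => exact ha A rfl
  | andI d₁ d₂ d₃ ih₁ ih₂ ih₃ =>
    obtain ⟨⟨h₁, h₂⟩, h₃⟩ := ha
    exact ih₃ (forall_mem_le_of_diff_singleton le_rfl h₃ (le_inf (ih₁ h₁) (ih₂ h₂)))
  | @impI A B C d₁ d₂ ih₁ ih₂ =>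
    obtain ⟨h₁, h₂⟩ := ha
    have hAB : a ≤ A.eval v ⇨ B.eval v :=
      le_himp_iff.2 (ih₁ (forall_mem_le_of_diff_singleton inf_le_left h₁ inf_le_right))
    exact ih₂ (forall_mem_le_of_diff_singleton le_rfl h₂ hAB)
  | orI₁ B d₁ d₂ ih₁ ih₂ =>
    obtain ⟨h₁, h₂⟩ := ha
    exact ih₂ (forall_mem_le_of_diff_singleton le_rfl h₂ (le_sup_of_le_left (ih₁ h₁)))
  | orI₂ A d₁ d₂ ih₁ ih₂ =>
    obtain ⟨h₁, h₂⟩ := ha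
    exact ih₂ (forall_mem_le_of_diff_singleton le_rfl h₂ (le_sup_of_le_right (ih₁ h₁)))
  | andE d₁ d₂ ih₁ ih₂ =>
    obtain ⟨h₁, h₂⟩ := ha
    obtain ⟨hA, hB⟩ := le_inf_iff.1 (ih₁ h₁)
    exact ih₂ (forall_mem_le_of_diff le_rfl h₂ (by simp [hA, hB]))
  | @impE A B C d₁ d₂ d₃ ih₁ ih₂ ih₃ =>
    obtain ⟨⟨h₁, h₂⟩, h₃⟩ := ha
    have hB : a ≤ B.eval v := (le_inf (ih₁ h₁) (ih₂ h₂)).trans himp_inf_le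
    exact ih₃ (forall_mem_le_of_diff_singleton le_rfl h₃ hB)
  | @orE A B C d₁ d₂ d₃ ih₁ ih₂ ih₃ =>
    obtain ⟨⟨h₁, h₂⟩, h₃⟩ := ha
    calc a ≤ a ⊓ (A.eval v ⊔ B.eval v) := le_inf le_rfl (ih₁ h₁)
      _ = a ⊓ A.eval v ⊔ a ⊓ B.eval v := inf_sup_left ..
      _ ≤ C.eval v := sup_le (ih₂ (forall_mem_le_of_diff_singleton inf_le_left h₂ inf_le_right))
        (ih₃ (forall_mem_le_of_diff_singleton inf_le_left h₃ inf_le_right))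
  | falsumE d ih => exact (ih ha).trans bot_le

/-- Schütte's semivaluations, with values in a Heyting algebra: `l A` bounds from below and `r A`
from above what the value of `A` can be, given the bounds for the immediate subformulas of `A`. -/
structure IsSemivaluation (l r : Formula → H) : Prop where
  left_falsum : l .falsum ≤ ⊥
  left_and (A B : Formula) : l (.and A B) ≤ l A ⊓ l B
  left_or (A B : Formula) : l (.or A B) ≤ l A ⊔ l B
  left_imp (A B : Formula) : l (.imp A B) ≤ r A ⇨ l B
  right_and (A B : Formula) : r A ⊓ r B ≤ r (.and A B)
  right_or (A B : Formula) : r A ⊔ r B ≤ r (.or A B)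
  right_imp (A B : Formula) : l A ⇨ r B ≤ r (.imp A B)

theorem IsSemivaluation.eval_mem_Icc {l r : Formula → H} (h : IsSemivaluation l r) {v : ℕ → H}
    (hv : ∀ n, v n ∈ Icc (l (.atom n)) (r (.atom n))) (A : Formula) :
    A.eval v ∈ Icc (l A) (r A) := by
  induction A with
  | atom n => exact hv n
  | falsum => exact ⟨h.left_falsum, bot_le⟩
  | and A B ihA ihB =>
    exact ⟨(h.left_and A B).trans (inf_le_inf ihA.1 ihB.1),
      (inf_le_inf ihA.2 ihB.2).trans (h.right_and A B)⟩
  | or A B ihA ihB =>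
    exact ⟨(h.left_or A B).trans (sup_le_sup ihA.1 ihB.1),
      (sup_le_sup ihA.2 ihB.2).trans (h.right_or A B)⟩
  | imp A B ihA ihB =>
    exact ⟨(h.left_imp A B).trans (himp_le_himp ihA.2 ihB.1),
      (himp_le_himp ihA.1 ihB.2).trans (h.right_imp A B)⟩

end Semantics

section ImposedInequalities

variable {X : Type*} [Order.Frame X]

/-- The sublocale obtained by imposing `p ≤ q` for all `p`, `q` related by `R`: it consists of the
elements `u` that cannot tell `p ≤ q` apart from a true inequality. -/
def imposedSublocale (R : X → X → Prop) : Sublocale X where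
  carrier := {u | ∀ p q, R p q → q ⇨ u ≤ p ⇨ u}
  sInf_mem' s hs p q hpq := by
    rw [le_himp_iff]
    refine le_sInf fun u hu ↦ le_himp_iff.1 ?_
    exact (himp_le_himp_left (sInf_le hu)).trans (hs hu p q hpq)
  himp_mem' a u hu p q hpq := by
    rw [himp_left_comm q, himp_left_comm p]
    exact himp_le_himp_left (hu p q hpq)

theorem restrict_imposedSublocale_le {R : X → X → Prop} {p q : X} (hpq : R p q) :
    (imposedSublocale R).restrict p ≤ (imposedSublocale R).restrict q := by
  set u := (imposedSublocale R).restrict q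
  have hq : q ≤ u.1 := (imposedSublocale R).giRestrict.gc.le_u_l q
  have hqp : q ⇨ u.1 ≤ p ⇨ u.1 := u.2 p q hpq
  rw [himp_eq_top_iff.2 hq, top_le_iff, himp_eq_top_iff] at hqp
  exact (imposedSublocale R).giRestrict.gc.l_le hqp

end ImposedInequalities

theorem mem_of_mem_himp {α : Type*} [Preorder α] {s t : LowerSet α} {a b : α}
    (ha : a ∈ s ⇨ t) (hba : b ≤ a) (hb : b ∈ s) : b ∈ t :=
  (himp_inf_le : (s ⇨ t) ⊓ s ≤ t) ⟨(s ⇨ t).lower hba ha, hb⟩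

/-- `A` has a normal deduction from assumptions in `Γ`. -/
def NormallyProvable (Γ : Set Formula) (A : Formula) : Prop :=
  ∃ d : Ded A, hyps d ⊆ Γ ∧ NormalForm d

namespace NormallyProvable

variable {Γ Δ : Set Formula} {A B C : Formula}

theorem mono (hΓΔ : Γ ⊆ Δ) : NormallyProvable Γ A → NormallyProvable Δ A :=
  fun ⟨d, hd, nd⟩ ↦ ⟨d, hd.trans hΓΔ, nd⟩

theorem ass (h : A ∈ Γ) : NormallyProvable Γ A :=
  ⟨.ass A, by simpa [hyps] using h, by simp [NormalForm, HasMaxFormula, HasMaxSegment]⟩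

theorem andI : NormallyProvable Γ A → NormallyProvable Γ B → NormallyProvable Γ (.and A B) := by
  rintro ⟨d, hd, nd⟩ ⟨e, he, ne⟩
  refine ⟨.andI d e (.ass _), by simp [hyps, hd, he], ?_⟩
  simp_all [NormalForm, HasMaxFormula, HasMaxSegment, MajorOpen]

theorem orI₁ : NormallyProvable Γ A → NormallyProvable Γ (.or A B) := by
  rintro ⟨d, hd, nd⟩
  refine ⟨.orI₁ B d (.ass _), by simp [hyps, hd], ?_⟩
  simp_all [NormalForm, HasMaxFormula, HasMaxSegment, MajorOpen]

theorem orI₂ : NormallyProvable Γ B → NormallyProvable Γ (.or A B) := by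
  rintro ⟨d, hd, nd⟩
  refine ⟨.orI₂ A d (.ass _), by simp [hyps, hd], ?_⟩
  simp_all [NormalForm, HasMaxFormula, HasMaxSegment, MajorOpen]

theorem impI : NormallyProvable (insert A Γ) B → NormallyProvable Γ (.imp A B) := by
  rintro ⟨d, hd, nd⟩
  refine ⟨.impI A d (.ass (.imp A B)), by simpa [hyps] using hd, ?_⟩
  simp_all [NormalForm, HasMaxFormula, HasMaxSegment, MajorOpen]

theorem andE (h : .and A B ∈ Γ) :
    NormallyProvable (insert A (insert B Γ)) C → NormallyProvable Γ C := by
  rintro ⟨d, hd, nd⟩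
  refine ⟨.andE (.ass (.and A B)) d, ?_, ?_⟩
  · simpa [hyps, h, insert_subset_iff, sdiff_subset_iff, insert_union] using hd
  · simp_all [NormalForm, HasMaxFormula, HasMaxSegment, Ded.endsWithArbitrary]

theorem impE (h : .imp A B ∈ Γ) :
    NormallyProvable Γ A → NormallyProvable (insert B Γ) C → NormallyProvable Γ C := by
  rintro ⟨d, hd, nd⟩ ⟨e, he, ne⟩
  refine ⟨.impE (.ass (.imp A B)) d e, ?_, ?_⟩
  · simpa [hyps, h, insert_subset_iff, hd] using he
  · simp_all [NormalForm, HasMaxFormula, HasMaxSegment, Ded.endsWithArbitrary]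

theorem orE (h : .or A B ∈ Γ) :
    NormallyProvable (insert A Γ) C → NormallyProvable (insert B Γ) C → NormallyProvable Γ C := by
  rintro ⟨d, hd, nd⟩ ⟨e, he, ne⟩
  refine ⟨.orE (.ass (.or A B)) d e, ?_, ?_⟩
  · simpa [hyps, h, insert_subset_iff] using And.intro hd he
  · simp_all [NormalForm, HasMaxFormula, HasMaxSegment, Ded.endsWithArbitrary]

theorem falsumE (h : .falsum ∈ Γ) : NormallyProvable Γ C :=
  ⟨.falsumE (.ass _), by simpa [hyps] using h,
    by simp [NormalForm, HasMaxFormula, HasMaxSegment, Ded.endsWithArbitrary]⟩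

end NormallyProvable

/-- The frame of upward closed sets of contexts. They are encoded as lower sets for the reverse
inclusion because Mathlib orders `UpperSet` by reverse inclusion. -/
abbrev ContextSet : Type := LowerSet (Set Formula)ᵒᵈ

/-- The contexts containing `A`. -/
def assumed (A : Formula) : ContextSet where
  carrier := {Γ | A ∈ ofDual Γ}
  lower' _ _ hΔΓ hA := hΔΓ hA

/-- The contexts from which `A` has a normal deduction. -/
def normal (A : Formula) : ContextSet where
  carrier := {Γ | NormallyProvable (ofDual Γ) A}
  lower' _ _ hΔΓ hA := hA.mono hΔΓ

theorem assumed_le_normal (A : Formula) : assumed A ≤ normal A :=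
  fun _ ↦ NormallyProvable.ass

theorem assumed_himp_normal_le (A B : Formula) : assumed A ⇨ normal B ≤ normal (.imp A B) :=
  fun _ h ↦ .impI (mem_of_mem_himp h (subset_insert _ _) (mem_insert _ _))

/-- The inequalities between sets of contexts that the left semivaluation laws ask for. -/
inductive LeftLaw : ContextSet → ContextSet → Prop
  | falsum : LeftLaw (assumed .falsum) ⊥
  | and (A B : Formula) : LeftLaw (assumed (.and A B)) (assumed A ⊓ assumed B)
  | or (A B : Formula) : LeftLaw (assumed (.or A B)) (assumed A ⊔ assumed B)
  | imp (A B : Formula) : LeftLaw (assumed (.imp A B) ⊓ normal A) (assumed B)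

/-- The stable sets of contexts, in which the left semivaluation laws hold. -/
def stable : Sublocale ContextSet := imposedSublocale LeftLaw

theorem restrict_stable_le {p q : ContextSet} (hpq : LeftLaw p q) :
    stable.restrict p ≤ stable.restrict q :=
  restrict_imposedSublocale_le hpq

theorem normal_mem_stable (C : Formula) : normal C ∈ stable := by
  rintro p q hpq
  rw [le_himp_iff]
  rintro Γ ⟨h, hp⟩
  cases hpq with
  | falsum => exact .falsumE hp
  | and A B =>
    exact .andE hp (mem_of_mem_himp h ((subset_insert B _).trans (subset_insert A _))
      ⟨mem_insert _ _, mem_insert_of_mem _ (mem_insert _ _)⟩)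
  | or A B =>
    exact .orE hp
      (mem_of_mem_himp h (subset_insert A _) (.inl (mem_insert _ _)))
      (mem_of_mem_himp h (subset_insert B _) (.inr (mem_insert _ _)))
  | imp A B =>
    exact .impE hp.1 hp.2 (mem_of_mem_himp h (subset_insert B _) (mem_insert _ _))

/-- The smallest stable set above `assumed A`. -/
def stableAssumed (A : Formula) : stable := stable.restrict (assumed A)

/-- The set `normal A`, as a stable set. -/
def stableNormal (A : Formula) : stable := ⟨normal A, normal_mem_stable A⟩

theorem assumed_le_stableAssumed (A : Formula) : assumed A ≤ stableAssumed A :=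
  stable.giRestrict.gc.le_u_l _

theorem stableAssumed_le_stableNormal (A : Formula) : stableAssumed A ≤ stableNormal A :=
  stable.giRestrict.gc.l_le (assumed_le_normal A)

theorem isSemivaluation_stable : IsSemivaluation stableAssumed stableNormal where
  left_falsum := (restrict_stable_le .falsum).trans_eq (map_bot stable.restrict)
  left_and A B := (restrict_stable_le (.and A B)).trans_eq (map_inf stable.restrict _ _)
  left_or A B := (restrict_stable_le (.or A B)).trans_eq (map_sup stable.restrict _ _)
  left_imp A B := by
    rw [le_himp_iff]
    calc stableAssumed (.imp A B) ⊓ stableNormal A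
        = stable.restrict (assumed (.imp A B) ⊓ normal A) := by
          rw [map_inf, Sublocale.restrict_of_mem (normal_mem_stable A)]; rfl
      _ ≤ stableAssumed B := restrict_stable_le (.imp A B)
  right_and A B := fun _ h ↦ .andI h.1 h.2
  right_or A B := sup_le (fun _ ↦ .orI₁) (fun _ ↦ .orI₂)
  right_imp A B :=
    (himp_le_himp_right (assumed_le_stableAssumed A)).trans (assumed_himp_normal_le A B)

/-- If `Γ ⊢_I A`, then there is a deduction in normal form with `A` as its
conclusion and formulas from `Γ` as its undischarged assumptions. -/
theorem normal_form_of_provable (Γ : Set Formula) (A : Formula) (h : Provable Γ A) :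
    ∃ d : Ded A, hyps d ⊆ Γ ∧ NormalForm d := by
  obtain ⟨d, hd⟩ := h
  let v (n : ℕ) : stable := stableNormal (.atom n)
  have eval_bounds (X : Formula) : X.eval v ∈ Icc (stableAssumed X) (stableNormal X) :=
    isSemivaluation_stable.eval_mem_Icc
      (fun n ↦ ⟨stableAssumed_le_stableNormal (.atom n), le_rfl⟩) X
  let γ : stable := stable.restrict (LowerSet.Iic (toDual Γ))
  have hγ (X : Formula) (hX : X ∈ hyps d) : γ ≤ X.eval v := by
    have : LowerSet.Iic (toDual Γ) ≤ assumed X := LowerSet.Iic_le.2 (hd hX)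
    exact (stable.giRestrict.gc.monotone_l this).trans (eval_bounds X).1
  have hγA : γ ≤ stableNormal A := (d.le_eval v hγ).trans (eval_bounds A).2
  exact LowerSet.Iic_le.1 (stable.giRestrict.gc.le_u hγA)
end

section
/- In a deduction in I in normal form, if any major premises of elimination rules lie on a branch, then they precede (occur earlier on the branch than) any major assumptions discharged by introduction rules that lie on the branch. -/
set_option autoImplicit false

/-- The kinds of rule applications (including the degenerate case of an
assumption). -/
inductive RuleKind : Type
  | ass | andI | impI | orI₁ | orI₂ | andE | impE | orE | falsumE
  deriving DecidableEq

/-- The kind of the rule application at the root of a deduction. -/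
def Ded.kind : ∀ {C : Formula}, Ded C → RuleKind
  | _, .ass _ => .ass
  | _, .andI _ _ _ => .andI
  | _, .impI _ _ _ => .impI
  | _, .orI₁ _ _ _ => .orI₁
  | _, .orI₂ _ _ _ => .orI₂
  | _, .andE _ _ => .andE
  | _, .impE _ _ _ => .impE
  | _, .orE _ _ _ => .orE
  | _, .falsumE _ => .falsumE

/-- A position in a deduction tree: the path of child indices from the root.
Each position determines a formula occurrence, namely the conclusion of the
subdeduction at that position (a leaf is the occurrence of an assumption). -/
abbrev Pos := List ℕ

/-- A deduction together with its conclusion. -/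
abbrev DedS := Σ C : Formula, Ded C

/-- The immediate subdeductions of a deduction, in the order: major premise
(for eliminations), specific premises (for introductions), minor premise (for
`⊃E`), arbitrary premise last. -/
def children : ∀ {C : Formula}, Ded C → List DedS
  | _, .ass _ => []
  | _, .andI d₁ d₂ d₃ => [⟨_, d₁⟩, ⟨_, d₂⟩, ⟨_, d₃⟩]
  | _, .impI _ d₁ d₂ => [⟨_, d₁⟩, ⟨_, d₂⟩]
  | _, .orI₁ _ d₁ d₂ => [⟨_, d₁⟩, ⟨_, d₂⟩]
  | _, .orI₂ _ d₁ d₂ => [⟨_, d₁⟩, ⟨_, d₂⟩]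
  | _, .andE d₁ d₂ => [⟨_, d₁⟩, ⟨_, d₂⟩]
  | _, .impE d₁ d₂ d₃ => [⟨_, d₁⟩, ⟨_, d₂⟩, ⟨_, d₃⟩]
  | _, .orE d₁ d₂ d₃ => [⟨_, d₁⟩, ⟨_, d₂⟩, ⟨_, d₃⟩]
  | _, .falsumE d => [⟨_, d⟩]

/-- The subdeduction at a given position (if the position is valid). -/
def subAt : Pos → DedS → Option DedS
  | [], s => some s
  | i :: p, ⟨_, d⟩ =>
    match (children d)[i]? with
    | some s => subAt p s
    | none => none

/-- The kind of the rule application at a given position. -/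
def kindAt (D : DedS) (q : Pos) : Option RuleKind := (subAt q D).map fun s => s.2.kind

/-- `OpenLeafAt d p F` : position `p` in `d` is a leaf (assumption) carrying
the formula `F`, and this occurrence of `F` is not discharged by any rule
application in `d` (so it is open in `d`). -/
def OpenLeafAt : ∀ {C : Formula}, Ded C → Pos → Formula → Prop
  | _, .ass A, [], F => F = A
  | _, @Ded.andI _ _ _ d₁ _ _, 0 :: p, F => OpenLeafAt d₁ p F
  | _, @Ded.andI _ _ _ _ d₂ _, 1 :: p, F => OpenLeafAt d₂ p F
  | _, @Ded.andI A B _ _ _ d₃, 2 :: p, F => OpenLeafAt d₃ p F ∧ F ≠ Formula.and A B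
  | _, @Ded.impI A _ _ d₁ _, 0 :: p, F => OpenLeafAt d₁ p F ∧ F ≠ A
  | _, @Ded.impI A B _ _ d₂, 1 :: p, F => OpenLeafAt d₂ p F ∧ F ≠ Formula.imp A B
  | _, @Ded.orI₁ _ _ _ d₁ _, 0 :: p, F => OpenLeafAt d₁ p F
  | _, @Ded.orI₁ A B _ _ d₂, 1 :: p, F => OpenLeafAt d₂ p F ∧ F ≠ Formula.or A B
  | _, @Ded.orI₂ _ _ _ d₁ _, 0 :: p, F => OpenLeafAt d₁ p F
  | _, @Ded.orI₂ A B _ _ d₂, 1 :: p, F => OpenLeafAt d₂ p F ∧ F ≠ Formula.or A B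
  | _, @Ded.andE _ _ _ d₁ _, 0 :: p, F => OpenLeafAt d₁ p F
  | _, @Ded.andE A B _ _ d₂, 1 :: p, F => OpenLeafAt d₂ p F ∧ F ≠ A ∧ F ≠ B
  | _, @Ded.impE _ _ _ d₁ _ _, 0 :: p, F => OpenLeafAt d₁ p F
  | _, @Ded.impE _ _ _ _ d₂ _, 1 :: p, F => OpenLeafAt d₂ p F
  | _, @Ded.impE _ B _ _ _ d₃, 2 :: p, F => OpenLeafAt d₃ p F ∧ F ≠ B
  | _, @Ded.orE _ _ _ d₁ _ _, 0 :: p, F => OpenLeafAt d₁ p F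
  | _, @Ded.orE A _ _ _ d₂ _, 1 :: p, F => OpenLeafAt d₂ p F ∧ F ≠ A
  | _, @Ded.orE _ B _ _ _ d₃, 2 :: p, F => OpenLeafAt d₃ p F ∧ F ≠ B
  | _, .falsumE d, 0 :: p, F => OpenLeafAt d p F
  | _, _, _, _ => False

/-- `ElimDischargePos d p` : the root of `d` is an application of an
elimination rule and the (relative) position `p` is an assumption discharged by
this application. -/
def ElimDischargePos : ∀ {C : Formula}, Ded C → Pos → Prop
  | _, @Ded.andE A B _ _ d₂, p =>
      ∃ r, p = 1 :: r ∧ (OpenLeafAt d₂ r A ∨ OpenLeafAt d₂ r B)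
  | _, @Ded.impE _ B _ _ _ d₃, p => ∃ r, p = 2 :: r ∧ OpenLeafAt d₃ r B
  | _, @Ded.orE A B _ _ d₂ d₃, p =>
      (∃ r, p = 1 :: r ∧ OpenLeafAt d₂ r A) ∨ (∃ r, p = 2 :: r ∧ OpenLeafAt d₃ r B)
  | _, _, _ => False

/-- `IntroMajorDischargePos d p` : the root of `d` is an application of an
introduction rule and the (relative) position `p` is a major assumption
discharged by this application (an occurrence of `A ∧ B`, `A ⊃ B` or `A ∨ B`
discharged above the arbitrary premise). -/
def IntroMajorDischargePos : ∀ {C : Formula}, Ded C → Pos → Prop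
  | _, @Ded.andI A B _ _ _ d₃, p => ∃ r, p = 2 :: r ∧ OpenLeafAt d₃ r (Formula.and A B)
  | _, @Ded.impI A B _ _ d₂, p => ∃ r, p = 1 :: r ∧ OpenLeafAt d₂ r (Formula.imp A B)
  | _, @Ded.orI₁ A B _ _ d₂, p => ∃ r, p = 1 :: r ∧ OpenLeafAt d₂ r (Formula.or A B)
  | _, @Ded.orI₂ A B _ _ d₂, p => ∃ r, p = 1 :: r ∧ OpenLeafAt d₂ r (Formula.or A B)
  | _, _, _ => False

/-- `DischargedByElimAt D q p` : in the deduction `D`, the (absolute) position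
`p` is an assumption discharged by the elimination rule application at
position `q`. -/
def DischargedByElimAt (D : DedS) (q p : Pos) : Prop :=
  ∃ s, subAt q D = some s ∧ ∃ r, p = q ++ r ∧ ElimDischargePos s.2 r

/-- `MajorDischargedByIntroAt D q p` : in the deduction `D`, the (absolute)
position `p` is a major assumption discharged by the introduction rule
application at position `q`. -/
def MajorDischargedByIntroAt (D : DedS) (q p : Pos) : Prop :=
  ∃ s, subAt q D = some s ∧ ∃ r, p = q ++ r ∧ IntroMajorDischargePos s.2 r

/-- The rule kinds of the elimination rules. -/
def RuleKind.isElim : RuleKind → Prop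
  | .andE => True
  | .impE => True
  | .orE => True
  | .falsumE => True
  | _ => False

/-- `IsMajorPremisePos D p` : the occurrence at position `p` is the major
premise of an application of an elimination rule. -/
def IsMajorPremisePos (D : DedS) (p : Pos) : Prop :=
  ∃ q k, p = q ++ [0] ∧ kindAt D q = some k ∧ k.isElim

/-- The child indices of the specific premises of each rule kind. -/
def specificIdx : RuleKind → List ℕ
  | .andI => [0, 1]
  | .impI => [0]
  | .orI₁ => [0]
  | .orI₂ => [0]
  | _ => []

/-- The child indices of the arbitrary premises of each rule kind. -/
def arbitraryIdx : RuleKind → List ℕ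
  | .andI => [2]
  | .impI => [1]
  | .orI₁ => [1]
  | .orI₂ => [1]
  | .andE => [1]
  | .impE => [2]
  | .orE => [1, 2]
  | _ => []

/-- One step along a branch, from the occurrence at position `p` to the
occurrence at position `p'`:
* from the major premise of an elimination rule other than `⊥E` to an
  assumption discharged by that application;
* from the major premise of `⊥E` to its conclusion;
* from a specific premise of an introduction rule to a major assumption
  discharged by it;
* from an arbitrary premise to the conclusion of the rule. -/
def BranchStep (D : DedS) (p p' : Pos) : Prop :=
  (∃ q k, p = q ++ [0] ∧ kindAt D q = some k ∧
      (k = RuleKind.andE ∨ k = RuleKind.impE ∨ k = RuleKind.orE) ∧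
      DischargedByElimAt D q p') ∨
  (∃ q, p = q ++ [0] ∧ kindAt D q = some RuleKind.falsumE ∧ p' = q) ∨
  (∃ q k i, p = q ++ [i] ∧ kindAt D q = some k ∧ i ∈ specificIdx k ∧
      MajorDischargedByIntroAt D q p') ∨
  (∃ q k i, p = q ++ [i] ∧ kindAt D q = some k ∧ i ∈ arbitraryIdx k ∧ p' = q)

/-- `IsBranch D σ` : `σ` is a branch of the deduction `D`: a sequence of
(positions of) formula occurrences `σ₁, …, σₙ` such that `σ₁` is an assumption
that is neither discharged by an elimination rule nor a major assumption
discharged by an introduction rule, `σₙ` is either the conclusion of `D` or the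
minor premise of an application of `⊃E`, and each `σᵢ₊₁` is obtained from `σᵢ`
by a branch step. -/
def IsBranch (D : DedS) (σ : List Pos) : Prop :=
  σ ≠ [] ∧
  (∀ p ∈ σ, (subAt p D).isSome) ∧
  (∃ p, σ.head? = some p ∧ kindAt D p = some RuleKind.ass ∧
      (¬ ∃ q, DischargedByElimAt D q p) ∧ (¬ ∃ q, MajorDischargedByIntroAt D q p)) ∧
  (∃ p, σ.getLast? = some p ∧
      (p = [] ∨ ∃ q, p = q ++ [1] ∧ kindAt D q = some RuleKind.impE)) ∧
  σ.Chain' (BranchStep D)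

/-!
In a normal deduction, once a branch is at an occurrence that is not a major premise, it never
reaches a major premise again. A step that starts at such an occurrence leads either to a major
assumption discharged by an introduction, which is not a major premise because there are no maximal
formulas, or from an arbitrary premise down to the conclusion of its rule, which is not a major
premise because there are no maximal segments.
-/

section

variable {C F : Formula} {d : Ded C} {D s t : DedS} {p q r : Pos} {i : ℕ} {k : RuleKind}

theorem subAt_cons : subAt (i :: p) D = (children D.2)[i]?.bind (subAt p) := by
  rw [subAt]
  cases (children D.2)[i]? <;> rfl

theorem subAt_append : subAt (q ++ r) D = (subAt q D).bind (subAt r) := by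
  induction q generalizing D with
  | nil => rfl
  | cons i q ih => simp only [List.cons_append, subAt_cons, ih, Option.bind_assoc]

theorem subAt_singleton : subAt [i] D = (children D.2)[i]? := by
  rw [subAt_cons]
  exact Option.bind_fun_some _

theorem kindAt_append (hs : subAt q D = some s) : kindAt D (q ++ r) = kindAt s r := by
  rw [kindAt, subAt_append, hs, Option.bind_some, kindAt]

theorem isMajorPremisePos_concat :
    IsMajorPremisePos D (p ++ [i]) ↔ i = 0 ∧ ∃ k, kindAt D p = some k ∧ k.isElim := by
  constructor
  · rintro ⟨q, k, hq, hk, hElim⟩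
    obtain ⟨rfl, hi⟩ := List.append_inj' hq rfl
    exact ⟨List.singleton_inj.1 hi, k, hk, hElim⟩
  · rintro ⟨rfl, k, hk, hElim⟩
    exact ⟨p, k, rfl, hk, hElim⟩

theorem isMajorPremisePos_append (hs : subAt q D = some s) (hr : r ≠ []) :
    IsMajorPremisePos D (q ++ r) ↔ IsMajorPremisePos s r := by
  obtain ⟨r, i, rfl⟩ := List.eq_nil_or_concat r |>.resolve_left hr
  rw [List.concat_eq_append, ← List.append_assoc, isMajorPremisePos_concat,
    isMajorPremisePos_concat, kindAt_append hs]

theorem not_isMajorPremisePos_nil : ¬ IsMajorPremisePos D [] := by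
  rintro ⟨q, -, hq, -⟩
  exact List.append_ne_nil_of_right_ne_nil q (List.cons_ne_nil 0 []) hq.symm

theorem isMajorPremisePos_singleton : IsMajorPremisePos D [i] ↔ i = 0 ∧ D.2.kind.isElim := by
  simpa [kindAt, subAt] using isMajorPremisePos_concat (D := D) (p := []) (i := i)

theorem isMajorPremisePos_cons (ht : (children D.2)[i]? = some t) :
    IsMajorPremisePos D (i :: p) ↔
      (p = [] ∧ i = 0 ∧ D.2.kind.isElim) ∨ IsMajorPremisePos t p := by
  rcases eq_or_ne p [] with rfl | hp
  · simp only [isMajorPremisePos_singleton, true_and, not_isMajorPremisePos_nil, or_false]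
  · rw [or_iff_right (hp ·.1)]
    exact isMajorPremisePos_append (subAt_singleton.trans ht) hp

/-- The formulas whose open occurrences in the premise deduction with child index `i` are
discharged by the last rule of a deduction. It gives a description of discharge that is uniform
in the rules; where no premise with index `i` exists or it discharges nothing, the set is empty. -/
def Ded.discharged : ∀ {C : Formula}, Ded C → ℕ → Set Formula
  | _, @Ded.andI A B _ _ _ _, 2 => {Formula.and A B}
  | _, @Ded.impI A _ _ _ _, 0 => {A}
  | _, @Ded.impI A B _ _ _, 1 => {Formula.imp A B}
  | _, @Ded.orI₁ A B _ _ _, 1 => {Formula.or A B}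
  | _, @Ded.orI₂ A B _ _ _, 1 => {Formula.or A B}
  | _, @Ded.andE A B _ _ _, 1 => {A, B}
  | _, @Ded.impE _ B _ _ _ _, 2 => {B}
  | _, @Ded.orE A _ _ _ _ _, 1 => {A}
  | _, @Ded.orE _ B _ _ _ _, 2 => {B}
  | _, _, _ => ∅

theorem openLeafAt_nil : OpenLeafAt d [] F ↔ F = C ∧ d.isAss = true := by
  cases d <;> simp [OpenLeafAt, Ded.isAss]

theorem openLeafAt_cons :
    OpenLeafAt d (i :: p) F ↔
      ∃ t, (children d)[i]? = some t ∧ OpenLeafAt t.2 p F ∧ F ∉ d.discharged i := by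
  cases d <;> rcases i with _ | _ | _ | i <;> simp [OpenLeafAt, children, Ded.discharged]

theorem majorOpen_of_isAss_major (hElim : d.kind.isElim) (ht : (children d)[0]? = some t)
    (hAss : t.2.isAss = true) : MajorOpen t.1 d := by
  cases d <;> simp only [Ded.kind, RuleKind.isElim] at hElim <;>
    obtain rfl := Option.some.inj ht <;> exact Or.inl ⟨rfl, hAss⟩

theorem MajorOpen.of_child (hOpen : MajorOpen F t.2) (ht : (children d)[i]? = some t)
    (hF : F ∉ d.discharged i) : MajorOpen F d := by
  cases d <;> rcases i with _ | _ | _ | i <;> cases ht <;>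
    simp_all [MajorOpen, Ded.discharged]

theorem majorOpen_of_openLeafAt (hLeaf : OpenLeafAt d p F) (hMajor : IsMajorPremisePos ⟨C, d⟩ p) :
    MajorOpen F d := by
  induction p generalizing C with
  | nil => exact absurd hMajor not_isMajorPremisePos_nil
  | cons i p ih =>
    obtain ⟨t, ht, hLeafChild, hF⟩ := openLeafAt_cons.1 hLeaf
    rcases (isMajorPremisePos_cons ht).1 hMajor with ⟨rfl, rfl, hElim⟩ | hMajorChild
    · obtain ⟨rfl, hAss⟩ := openLeafAt_nil.1 hLeafChild
      exact majorOpen_of_isAss_major hElim ht hAss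
    · exact (ih hLeafChild hMajorChild).of_child ht hF

theorem IntroMajorDischargePos.ne_nil (hDis : IntroMajorDischargePos d r) : r ≠ [] := by
  rintro rfl
  cases d <;> simp [IntroMajorDischargePos] at hDis

theorem IntroMajorDischargePos.hasMaxFormula (hDis : IntroMajorDischargePos d r)
    (hMajor : IsMajorPremisePos ⟨C, d⟩ r) : HasMaxFormula d := by
  cases d <;> simp only [IntroMajorDischargePos] at hDis <;>
    obtain ⟨p, rfl, hLeaf⟩ := hDis <;>
    exact Or.inl <| majorOpen_of_openLeafAt hLeaf <|
      ((isMajorPremisePos_cons rfl).1 hMajor).resolve_left (by simp)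

theorem hasMaxSegment_of_endsWithArbitrary_major (hElim : d.kind.isElim)
    (ht : (children d)[0]? = some t) (hArb : t.2.endsWithArbitrary) : HasMaxSegment d := by
  cases d <;> simp only [Ded.kind, RuleKind.isElim] at hElim <;>
    obtain rfl := Option.some.inj ht <;> exact Or.inl hArb

theorem endsWithArbitrary_of_mem_arbitraryIdx (hi : i ∈ arbitraryIdx d.kind) :
    d.endsWithArbitrary := by
  cases d <;> simp [Ded.endsWithArbitrary, Ded.kind, arbitraryIdx] at hi ⊢

theorem NormalForm.of_child (hd : NormalForm d) (ht : (children d)[i]? = some t) :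
    NormalForm t.2 := by
  obtain ⟨hFormula, hSegment⟩ := hd
  cases d <;> rcases i with _ | _ | _ | i <;> cases ht <;>
    simp_all [NormalForm, HasMaxFormula, HasMaxSegment]

theorem NormalForm.of_subAt (hD : NormalForm D.2) (hs : subAt q D = some s) :
    NormalForm s.2 := by
  induction q generalizing D with
  | nil => exact Option.some.inj hs ▸ hD
  | cons i q ih =>
    obtain ⟨t, ht, hs⟩ := Option.bind_eq_some_iff.1 (subAt_cons.symm.trans hs)
    exact ih (hD.of_child ht) hs

theorem NormalForm.not_isMajorPremisePos_of_majorDischargedByIntroAt (hD : NormalForm D.2)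
    (hDis : MajorDischargedByIntroAt D q p) : ¬ IsMajorPremisePos D p := by
  obtain ⟨s, hs, r, rfl, hDis⟩ := hDis
  rw [isMajorPremisePos_append hs hDis.ne_nil]
  exact fun hMajor ↦ (hD.of_subAt hs).1 (hDis.hasMaxFormula hMajor)

theorem NormalForm.not_isMajorPremisePos_of_mem_arbitraryIdx (hD : NormalForm D.2)
    (hk : kindAt D p = some k) (hi : i ∈ arbitraryIdx k) : ¬ IsMajorPremisePos D p := by
  rintro ⟨q, _, rfl, hq, hElim⟩
  obtain ⟨s, hs, rfl⟩ := Option.map_eq_some_iff.1 hq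
  rw [kindAt_append hs, kindAt, subAt_singleton] at hk
  obtain ⟨t, ht, rfl⟩ := Option.map_eq_some_iff.1 hk
  have hArb : t.2.endsWithArbitrary := endsWithArbitrary_of_mem_arbitraryIdx hi
  exact (hD.of_subAt hs).2 (hasMaxSegment_of_endsWithArbitrary_major hElim ht hArb)

theorem NormalForm.not_isMajorPremisePos_of_branchStep (hD : NormalForm D.2)
    (hStep : BranchStep D p q) (hp : ¬ IsMajorPremisePos D p) : ¬ IsMajorPremisePos D q := by
  rcases hStep with ⟨r, k, rfl, hk, hElim, -⟩ | ⟨r, rfl, hk, -⟩ | ⟨r, k, i, -, -, -, hDis⟩ |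
    ⟨r, k, i, -, hk, hi, rfl⟩
  · exact absurd ⟨r, k, rfl, hk, by rcases hElim with rfl | rfl | rfl <;> trivial⟩ hp
  · exact absurd ⟨r, .falsumE, rfl, hk, trivial⟩ hp
  · exact hD.not_isMajorPremisePos_of_majorDischargedByIntroAt hDis
  · exact hD.not_isMajorPremisePos_of_mem_arbitraryIdx hk hi

theorem NormalForm.not_isMajorPremisePos_of_reflTransGen (hD : NormalForm D.2)
    (hPath : Relation.ReflTransGen (BranchStep D) p q) (hp : ¬ IsMajorPremisePos D p) :
    ¬ IsMajorPremisePos D q := by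
  induction hPath with
  | refl => exact hp
  | tail _ hStep ih => exact hD.not_isMajorPremisePos_of_branchStep hStep ih

end

theorem reflTransGen_getElem_of_isChain {α : Type*} {R : α → α → Prop} {l : List α}
    (hl : l.IsChain R) {i j : ℕ} (hij : i ≤ j) (hj : j < l.length) :
    Relation.ReflTransGen R (l[i]'(hij.trans_lt hj)) l[j] := by
  have hPairwise : l.Pairwise (Relation.ReflTransGen R) :=
    (hl.imp fun _ _ ↦ Relation.ReflTransGen.single).pairwise
  rcases hij.eq_or_lt with rfl | hlt
  · exact .refl
  · exact List.pairwise_iff_getElem.1 hPairwise i j _ hj hlt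

theorem elim_majors_precede_intro_discharges_on_branch_general
    {C : Formula} (d : Ded C) (hd : NormalForm d) (σ : List Pos)
    (hσ : σ.IsChain (BranchStep ⟨C, d⟩)) (i j : ℕ) (hi : i < σ.length) (hj : j < σ.length)
    (hmaj : IsMajorPremisePos ⟨C, d⟩ (σ.get ⟨i, hi⟩))
    (hdis : ∃ q, MajorDischargedByIntroAt ⟨C, d⟩ q (σ.get ⟨j, hj⟩)) :
    i < j := by
  by_contra! hji
  obtain ⟨q, hq⟩ := hdis
  have hPath : Relation.ReflTransGen (BranchStep ⟨C, d⟩) (σ.get ⟨j, hj⟩) (σ.get ⟨i, hi⟩) :=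
    reflTransGen_getElem_of_isChain hσ hji hi
  have hStart : ¬ IsMajorPremisePos ⟨C, d⟩ (σ.get ⟨j, hj⟩) :=
    hd.not_isMajorPremisePos_of_majorDischargedByIntroAt hq
  exact hd.not_isMajorPremisePos_of_reflTransGen hPath hStart hmaj

/-- **Corollary (order of branches)**: in a deduction in normal form, if any
major premises of elimination rules lie on a branch, then they precede (occur
strictly earlier on the branch than) any major assumptions discharged by
introduction rules that lie on the branch. -/
theorem elim_majors_precede_intro_discharges_on_branch
    {C : Formula} (d : Ded C) (hd : NormalForm d) (σ : List Pos)
    (hσ : IsBranch ⟨C, d⟩ σ) (i j : ℕ) (hi : i < σ.length) (hj : j < σ.length)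
    (hmaj : IsMajorPremisePos ⟨C, d⟩ (σ.get ⟨i, hi⟩))
    (hdis : ∃ q, MajorDischargedByIntroAt ⟨C, d⟩ q (σ.get ⟨j, hj⟩)) :
    i < j :=
  elim_majors_precede_intro_discharges_on_branch_general d hd σ hσ.2.2.2.2 i j hi hj hmaj hdis
end

section
/- Any deduction in I can be transformed into a deduction of the same conclusion from the same undischarged assumptions in which every application of a general introduction rule discharges exactly one major assumption (exactly one occurrence of the formula A∗B introduced by the rule). -/
set_option autoImplicit false

/-- `countOpen F d` : the number of occurrences of the formula `F` as an
assumption (leaf) of `d` that are not discharged within `d`, i.e. the number of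
occurrences of `F` that would be discharged by a rule applied below `d` that
discharges assumptions `F`. -/
def countOpen (F : Formula) : ∀ {C : Formula}, Ded C → ℕ
  | _, .ass A => if F = A then 1 else 0
  | _, @Ded.andI A B _ d₁ d₂ d₃ =>
      countOpen F d₁ + countOpen F d₂ +
        (if F = Formula.and A B then 0 else countOpen F d₃)
  | _, @Ded.impI A B _ d₁ d₂ =>
      (if F = A then 0 else countOpen F d₁) +
        (if F = Formula.imp A B then 0 else countOpen F d₂)
  | _, @Ded.orI₁ A B _ d₁ d₂ =>
      countOpen F d₁ + (if F = Formula.or A B then 0 else countOpen F d₂)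
  | _, @Ded.orI₂ A B _ d₁ d₂ =>
      countOpen F d₁ + (if F = Formula.or A B then 0 else countOpen F d₂)
  | _, @Ded.andE A B _ d₁ d₂ =>
      countOpen F d₁ + (if F = A ∨ F = B then 0 else countOpen F d₂)
  | _, @Ded.impE _ B _ d₁ d₂ d₃ =>
      countOpen F d₁ + countOpen F d₂ + (if F = B then 0 else countOpen F d₃)
  | _, @Ded.orE A B _ d₁ d₂ d₃ =>
      countOpen F d₁ + (if F = A then 0 else countOpen F d₂) +
        (if F = B then 0 else countOpen F d₃)
  | _, .falsumE d => countOpen F d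

/-- `UniqueDischarge d` : every application of a general introduction rule in
`d` discharges exactly one major assumption, i.e. exactly one occurrence of the
formula `A ∗ B` introduced by the rule. -/
def UniqueDischarge : ∀ {C : Formula}, Ded C → Prop
  | _, .ass _ => True
  | _, @Ded.andI A B _ d₁ d₂ d₃ =>
      countOpen (Formula.and A B) d₃ = 1 ∧
        UniqueDischarge d₁ ∧ UniqueDischarge d₂ ∧ UniqueDischarge d₃
  | _, @Ded.impI A B _ d₁ d₂ =>
      countOpen (Formula.imp A B) d₂ = 1 ∧ UniqueDischarge d₁ ∧ UniqueDischarge d₂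
  | _, @Ded.orI₁ A B _ d₁ d₂ =>
      countOpen (Formula.or A B) d₂ = 1 ∧ UniqueDischarge d₁ ∧ UniqueDischarge d₂
  | _, @Ded.orI₂ A B _ d₁ d₂ =>
      countOpen (Formula.or A B) d₂ = 1 ∧ UniqueDischarge d₁ ∧ UniqueDischarge d₂
  | _, .andE d₁ d₂ => UniqueDischarge d₁ ∧ UniqueDischarge d₂
  | _, .impE d₁ d₂ d₃ => UniqueDischarge d₁ ∧ UniqueDischarge d₂ ∧ UniqueDischarge d₃
  | _, .orE d₁ d₂ d₃ => UniqueDischarge d₁ ∧ UniqueDischarge d₂ ∧ UniqueDischarge d₃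
  | _, .falsumE d => UniqueDischarge d

/-!
Composing the one-leaf deduction of `F` with a deduction `d` by means of a detour through the
theorem `F ⊃ F` gives a deduction in which `F` is open exactly once, however many times, possibly
none, it is open in `d`. At an introduction rule the arbitrary premise can be replaced in this way,
with `F` the formula introduced: the only assumption this could add is `F` itself, which the rule
discharges.
-/

namespace Ded

variable {C F : Formula}

/-- Composition of a deduction `e` of `F` with a deduction `d` from assumptions `F`. It is a rule
application rather than a substitution of `e` for the leaves `F` of `d`, so `e` is used exactly
once, even when `F` is not open in `d`. -/
def cut (e : Ded F) (d : Ded C) : Ded C :=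
  .impE (.impI F (.ass F) (.ass (.imp F F))) e d

theorem hyps_cut (e : Ded F) (d : Ded C) : hyps (cut e d) = hyps e ∪ (hyps d \ {F}) := by
  simp [cut, hyps]

theorem countOpen_cut (G : Formula) (e : Ded F) (d : Ded C) :
    countOpen G (cut e d) = countOpen G e + if G = F then 0 else countOpen G d := by
  simp +contextual [cut, countOpen]

theorem uniqueDischarge_cut_iff (e : Ded F) (d : Ded C) :
    UniqueDischarge (cut e d) ↔ UniqueDischarge e ∧ UniqueDischarge d := by
  simp [cut, UniqueDischarge, countOpen]

/-- Contraction: merges the open occurrences of `F` in `d` into a single one, which is created if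
there is none. -/
def contract (F : Formula) (d : Ded C) : Ded C :=
  cut (.ass F) d

theorem hyps_contract_sdiff (F : Formula) (d : Ded C) :
    hyps (contract F d) \ {F} = hyps d \ {F} := by
  rw [contract, hyps_cut, hyps, Set.union_sdiff_left, sdiff_idem]

theorem countOpen_contract_self (F : Formula) (d : Ded C) : countOpen F (contract F d) = 1 := by
  simp [contract, countOpen_cut, countOpen]

theorem uniqueDischarge_contract_iff (F : Formula) (d : Ded C) :
    UniqueDischarge (contract F d) ↔ UniqueDischarge d := by
  simp [contract, uniqueDischarge_cut_iff, UniqueDischarge]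

/-- The transformation to unique discharge: contracts the major assumptions of every introduction
rule in the arbitrary premise of that rule. -/
def contractMajor : ∀ {C : Formula}, Ded C → Ded C
  | _, .ass A => .ass A
  | _, @andI A B _ d₁ d₂ d₃ =>
      .andI d₁.contractMajor d₂.contractMajor (d₃.contractMajor.contract (.and A B))
  | _, @impI A B _ d₁ d₂ =>
      .impI A d₁.contractMajor (d₂.contractMajor.contract (.imp A B))
  | _, @orI₁ A B _ d₁ d₂ =>
      .orI₁ B d₁.contractMajor (d₂.contractMajor.contract (.or A B))
  | _, @orI₂ A B _ d₁ d₂ =>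
      .orI₂ A d₁.contractMajor (d₂.contractMajor.contract (.or A B))
  | _, .andE d₁ d₂ => .andE d₁.contractMajor d₂.contractMajor
  | _, .impE d₁ d₂ d₃ => .impE d₁.contractMajor d₂.contractMajor d₃.contractMajor
  | _, .orE d₁ d₂ d₃ => .orE d₁.contractMajor d₂.contractMajor d₃.contractMajor
  | _, .falsumE d => .falsumE d.contractMajor

theorem hyps_contractMajor (d : Ded C) : hyps d.contractMajor = hyps d := by
  induction d <;> simp only [contractMajor, hyps, hyps_contract_sdiff, *]

theorem uniqueDischarge_contractMajor (d : Ded C) : UniqueDischarge d.contractMajor := by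
  induction d <;>
    simp only [contractMajor, UniqueDischarge, countOpen_contract_self,
      uniqueDischarge_contract_iff, and_self, *]

end Ded

/-- **Proposition (unique discharge)**: any deduction in I can be transformed
into a deduction of the same conclusion from the same undischarged assumptions
in which every application of a general introduction rule discharges exactly
one major assumption. -/
theorem unique_discharge_transformation {C : Formula} (d : Ded C) :
    ∃ d' : Ded C, hyps d' = hyps d ∧ UniqueDischarge d' :=
  ⟨d.contractMajor, d.hyps_contractMajor, d.uniqueDischarge_contractMajor⟩
end

section
/- The system I has the disjunction property: if ⊢_I A∨B (there is a proof of A∨B with no undischarged assumptions), then ⊢_I A or ⊢_I B. -/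
set_option autoImplicit false

/-!
Kleene's slash singles out formulas that are derivable and, if they are disjunctions, have a
slashed disjunct. The rules of **I** preserve it: once the specific or major premises are slashed,
so are the formulas discharged above the arbitrary premise (in one of the two branches, for `∨E`),
whose deduction therefore has only slashed assumptions again. The slash of an implication also
demands its derivability, for which slashed assumptions have to be replaced by derivations of them;
a single such cut on `A` is an introduction of `A ∨ A` followed at once by its elimination.
-/

/-- Derivability in **I**: `Derivable Γ C` is the relation `Γ ⊢_I C`, that is, `C` has a deduction
whose undischarged assumptions all belong to `Γ`. -/
def Derivable (Γ : Set Formula) (C : Formula) : Prop :=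
  ∃ d : Ded C, hyps d ⊆ Γ

theorem hyps_finite {C : Formula} (d : Ded C) : (hyps d).Finite := by
  induction d <;> simp [hyps, *]

namespace Derivable

variable {Γ Δ : Set Formula} {A B C : Formula}

theorem mono (h : Γ ⊆ Δ) : Derivable Γ C → Derivable Δ C
  | ⟨d, hd⟩ => ⟨d, hd.trans h⟩

theorem andI : Derivable Γ A → Derivable Γ B → Derivable Γ (A.and B)
  | ⟨d, hd⟩, ⟨e, he⟩ => ⟨.andI d e (.ass _), by simp [hyps, hd, he]⟩

theorem impI : Derivable (insert A Γ) B → Derivable Γ (A.imp B)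
  | ⟨d, hd⟩ => ⟨.impI A d (.ass _), by simpa [hyps] using hd⟩

theorem orI₁ : Derivable Γ A → Derivable Γ (A.or B)
  | ⟨d, hd⟩ => ⟨.orI₁ B d (.ass _), by simp [hyps, hd]⟩

theorem orI₂ : Derivable Γ B → Derivable Γ (A.or B)
  | ⟨d, hd⟩ => ⟨.orI₂ A d (.ass _), by simp [hyps, hd]⟩

theorem cut : Derivable Γ A → Derivable (insert A Γ) C → Derivable Γ C
  | ⟨d, hd⟩, ⟨e, he⟩ => by
    refine ⟨.orI₁ A d (.orE (.ass (A.or A)) e e), ?_⟩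
    have he' : hyps e \ {A} ⊆ Γ := Set.sdiff_singleton_subset_iff.mpr he
    simp only [hyps, Set.union_sdiff_distrib, Set.sdiff_self, Set.empty_union, Set.union_self]
    exact Set.union_subset hd (Set.sdiff_subset.trans he')

theorem of_finite_union {s : Set Formula} (hs : s.Finite) (h : ∀ B ∈ s, Derivable Δ B)
    (hC : Derivable (s ∪ Δ) C) : Derivable Δ C := by
  induction s, hs using Set.Finite.induction_on with
  | empty => simpa only [Set.empty_union] using hC
  | @insert A s _ _ ih =>
    have hA : Derivable (s ∪ Δ) A := (h A (Set.mem_insert A s)).mono Set.subset_union_right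
    rw [Set.insert_union] at hC
    exact ih (fun B hB ↦ h B (Set.mem_insert_of_mem A hB)) (hA.cut hC)

theorem trans (h : ∀ B ∈ Γ, Derivable Δ B) : Derivable Γ C → Derivable Δ C
  | ⟨d, hd⟩ =>
    of_finite_union (hyps_finite d) (fun B hB ↦ h B (hd hB)) ⟨d, Set.subset_union_left⟩

end Derivable

/-- Kleene's slash `Γ | A`, a strengthening of derivability from `Γ` in which a disjunction holds
only if one of its disjuncts does. Derivability is built in at atoms and implications only, since
`∧` and `∨` inherit it, and `⊥` is never slashed, even if it is derivable from `Γ`. -/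
def Slash (Γ : Set Formula) : Formula → Prop
  | .atom n => Derivable Γ (.atom n)
  | .falsum => False
  | .and A B => Slash Γ A ∧ Slash Γ B
  | .or A B => Slash Γ A ∨ Slash Γ B
  | .imp A B => Derivable Γ (.imp A B) ∧ (Slash Γ A → Slash Γ B)

namespace Slash

variable {Γ : Set Formula} {A B C : Formula}

theorem derivable : ∀ {A : Formula}, Slash Γ A → Derivable Γ A
  | .atom _, h => h
  | .falsum, h => h.elim
  | .and _ _, ⟨hA, hB⟩ => hA.derivable.andI hB.derivable
  | .or _ _, .inl hA => hA.derivable.orI₁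
  | .or _ _, .inr hB => hB.derivable.orI₂
  | .imp _ _, h => h.1

theorem derivable_imp (h : Derivable (insert A {D | Slash Γ D}) B) : Derivable Γ (A.imp B) := by
  refine .impI (.trans (fun D hD ↦ ?_) h)
  rcases hD with rfl | hD
  · exact ⟨.ass D, by simp [hyps]⟩
  · exact hD.derivable.mono (Set.subset_insert A Γ)

theorem of_hyps_subset (d : Ded C) (h : hyps d ⊆ {D | Slash Γ D}) : Slash Γ C := by
  have discharge {s : Set Formula} {D : Formula}
      (hs : s ⊆ insert D {D | Slash Γ D}) (hD : Slash Γ D) : s ⊆ {D | Slash Γ D} :=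
    hs.trans (Set.insert_subset hD subset_rfl)
  induction d with simp only [hyps, Set.union_subset_iff, Set.sdiff_subset_iff, Set.insert_union,
    Set.singleton_union, Set.singleton_subset_iff, Set.mem_ofPred_eq] at h
  | ass => exact h
  | andI d₁ d₂ d₃ ih₁ ih₂ ih₃ =>
    obtain ⟨⟨h₁, h₂⟩, h₃⟩ := h
    exact ih₃ (discharge h₃ ⟨ih₁ h₁, ih₂ h₂⟩)
  | impI A d₁ d₂ ih₁ ih₂ =>
    obtain ⟨h₁, h₂⟩ := h
    exact ih₂ (discharge h₂ ⟨derivable_imp ⟨_, h₁⟩, fun hA ↦ ih₁ (discharge h₁ hA)⟩)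
  | orI₁ B d₁ d₂ ih₁ ih₂ =>
    obtain ⟨h₁, h₂⟩ := h
    exact ih₂ (discharge h₂ (.inl (ih₁ h₁)))
  | orI₂ A d₁ d₂ ih₁ ih₂ =>
    obtain ⟨h₁, h₂⟩ := h
    exact ih₂ (discharge h₂ (.inr (ih₁ h₁)))
  | andE d₁ d₂ ih₁ ih₂ =>
    obtain ⟨h₁, h₂⟩ := h
    obtain ⟨hA, hB⟩ := ih₁ h₁
    exact ih₂ (h₂.trans (Set.insert_subset hA (Set.insert_subset hB subset_rfl)))
  | impE d₁ d₂ d₃ ih₁ ih₂ ih₃ =>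
    obtain ⟨⟨h₁, h₂⟩, h₃⟩ := h
    exact ih₃ (discharge h₃ ((ih₁ h₁).2 (ih₂ h₂)))
  | orE d₁ d₂ d₃ ih₁ ih₂ ih₃ =>
    obtain ⟨⟨h₁, h₂⟩, h₃⟩ := h
    rcases ih₁ h₁ with hA | hB
    · exact ih₂ (discharge h₂ hA)
    · exact ih₃ (discharge h₃ hB)
  | falsumE d ih => exact (ih h).elim

end Slash

theorem disjunction_property_general {Γ : Set Formula} (hΓ : ∀ D ∈ Γ, Slash Γ D) {A B : Formula} :
    Derivable Γ (A.or B) → Derivable Γ A ∨ Derivable Γ B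
  | ⟨d, hd⟩ => (Slash.of_hyps_subset d (hd.trans hΓ)).imp Slash.derivable Slash.derivable

/-- **Disjunction property of I**: if `⊢_I A ∨ B` (there is a proof of `A ∨ B`
with no undischarged assumptions), then `⊢_I A` or `⊢_I B`. -/
theorem disjunction_property (A B : Formula)
    (h : ∃ d : Ded (Formula.or A B), hyps d = ∅) :
    (∃ d : Ded A, hyps d = ∅) ∨ (∃ d : Ded B, hyps d = ∅) := by
  simp only [← Set.subset_empty_iff] at h ⊢
  exact disjunction_property_general (by simp) h
end

section
/- The system I is a formalisation of intuitionistic propositional logic: for all sets of formulas Γ and formulas A, Γ ⊢_I A if and only if Γ ⊢_NJ A, where NJ is Gentzen's natural deduction system for intuitionistic propositional logic. -/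
set_option autoImplicit false

/-- Deductions in Gentzen's natural deduction system NJ for intuitionistic
propositional logic, indexed by their conclusion:

* `ass A` : the one-formula deduction of `A` from the open assumption `A`;
* `andI` : from `A` and `B` infer `A ∧ B`;
* `andE₁`, `andE₂` : from `A ∧ B` infer `A`, respectively `B`;
* `impI A d` : from a deduction of `B` in which assumptions `A` may be
  discharged, infer `A ⊃ B`;
* `impE` : from `A ⊃ B` and `A` infer `B`;
* `orI₁`, `orI₂` : from `A` (respectively `B`) infer `A ∨ B`;
* `orE` : from `A ∨ B` and two deductions of `C` in which assumptions `A`,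
  respectively `B`, may be discharged, infer `C`;
* `falsumE` : from `⊥` infer any `C`. -/
inductive NJDed : Formula → Type
  | ass (A : Formula) : NJDed A
  | andI {A B : Formula} (d₁ : NJDed A) (d₂ : NJDed B) : NJDed (Formula.and A B)
  | andE₁ {A B : Formula} (d : NJDed (Formula.and A B)) : NJDed A
  | andE₂ {A B : Formula} (d : NJDed (Formula.and A B)) : NJDed B
  | impI (A : Formula) {B : Formula} (d : NJDed B) : NJDed (Formula.imp A B)
  | impE {A B : Formula} (d₁ : NJDed (Formula.imp A B)) (d₂ : NJDed A) : NJDed B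
  | orI₁ {A : Formula} (B : Formula) (d : NJDed A) : NJDed (Formula.or A B)
  | orI₂ (A : Formula) {B : Formula} (d : NJDed B) : NJDed (Formula.or A B)
  | orE {A B C : Formula} (d₁ : NJDed (Formula.or A B)) (d₂ : NJDed C) (d₃ : NJDed C) :
      NJDed C
  | falsumE {C : Formula} (d : NJDed Formula.falsum) : NJDed C

/-- The set of undischarged (open) assumptions of an NJ-deduction: `impI A d`
discharges the assumptions `A` of `d`, and `orE d₁ d₂ d₃` discharges the
assumptions `A` of `d₂` and the assumptions `B` of `d₃`. -/
def NJhyps : ∀ {C : Formula}, NJDed C → Set Formula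
  | _, .ass A => {A}
  | _, .andI d₁ d₂ => NJhyps d₁ ∪ NJhyps d₂
  | _, .andE₁ d => NJhyps d
  | _, .andE₂ d => NJhyps d
  | _, .impI A d => NJhyps d \ {A}
  | _, .impE d₁ d₂ => NJhyps d₁ ∪ NJhyps d₂
  | _, .orI₁ _ d => NJhyps d
  | _, .orI₂ _ d => NJhyps d
  | _, @NJDed.orE A B _ d₁ d₂ d₃ => NJhyps d₁ ∪ (NJhyps d₂ \ {A}) ∪ (NJhyps d₃ \ {B})
  | _, .falsumE d => NJhyps d

/-! The rules `∨E` and `⊥E` are common to both systems. Any other rule of NJ is the rule of I whose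
arbitrary premise is a bare assumption that the rule discharges. Conversely, any other rule of I is
the corresponding rule of NJ followed by cuts on the formulas that I discharges in the arbitrary
premise, and cut is admissible in NJ because a cut is a `⊃I` followed by a `⊃E`. -/

/-- Derivability `Γ ⊢_I A` in system I. It is stated by inclusion, as `Γ` may contain formulas that
the deduction does not use. -/
def IDerivable (Γ : Set Formula) (A : Formula) : Prop :=
  ∃ d : Ded A, hyps d ⊆ Γ

/-- Derivability `Γ ⊢_NJ A` in Gentzen's system NJ, with the same convention on `Γ` as in
`IDerivable`. -/
def NJDerivable (Γ : Set Formula) (A : Formula) : Prop :=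
  ∃ d : NJDed A, NJhyps d ⊆ Γ

infix:45 " ⊢ᴵ " => IDerivable

infix:45 " ⊢ᴺᴶ " => NJDerivable

section Derivability

variable {Γ Δ : Set Formula} {A B C : Formula}

theorem sdiff_pair_subset_iff {α : Type*} {s t : Set α} {a b : α} :
    s \ {a, b} ⊆ t ↔ s ⊆ insert a (insert b t) := by
  rw [Set.sdiff_subset_iff, Set.insert_union, Set.singleton_union]

namespace NJDerivable

theorem of_mem (h : A ∈ Γ) : Γ ⊢ᴺᴶ A :=
  ⟨.ass A, Set.singleton_subset_iff.2 h⟩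

theorem mono (hΓ : Γ ⊆ Δ) : Γ ⊢ᴺᴶ A → Δ ⊢ᴺᴶ A
  | ⟨d, h⟩ => ⟨d, h.trans hΓ⟩

theorem and_intro : Γ ⊢ᴺᴶ A → Γ ⊢ᴺᴶ B → Γ ⊢ᴺᴶ .and A B
  | ⟨d₁, h₁⟩, ⟨d₂, h₂⟩ => ⟨.andI d₁ d₂, Set.union_subset h₁ h₂⟩

theorem and_left : Γ ⊢ᴺᴶ .and A B → Γ ⊢ᴺᴶ A
  | ⟨d, h⟩ => ⟨.andE₁ d, h⟩

theorem and_right : Γ ⊢ᴺᴶ .and A B → Γ ⊢ᴺᴶ B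
  | ⟨d, h⟩ => ⟨.andE₂ d, h⟩

theorem imp_intro : insert A Γ ⊢ᴺᴶ B → Γ ⊢ᴺᴶ .imp A B
  | ⟨d, h⟩ => ⟨.impI A d, Set.sdiff_singleton_subset_iff.2 h⟩

theorem imp_elim : Γ ⊢ᴺᴶ .imp A B → Γ ⊢ᴺᴶ A → Γ ⊢ᴺᴶ B
  | ⟨d₁, h₁⟩, ⟨d₂, h₂⟩ => ⟨.impE d₁ d₂, Set.union_subset h₁ h₂⟩

theorem or_intro_left : Γ ⊢ᴺᴶ A → Γ ⊢ᴺᴶ .or A B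
  | ⟨d, h⟩ => ⟨.orI₁ B d, h⟩

theorem or_intro_right : Γ ⊢ᴺᴶ B → Γ ⊢ᴺᴶ .or A B
  | ⟨d, h⟩ => ⟨.orI₂ A d, h⟩

theorem or_elim : Γ ⊢ᴺᴶ .or A B → insert A Γ ⊢ᴺᴶ C → insert B Γ ⊢ᴺᴶ C → Γ ⊢ᴺᴶ C
  | ⟨d₁, h₁⟩, ⟨d₂, h₂⟩, ⟨d₃, h₃⟩ =>
    ⟨.orE d₁ d₂ d₃, Set.union_subset (Set.union_subset h₁ (Set.sdiff_singleton_subset_iff.2 h₂))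
      (Set.sdiff_singleton_subset_iff.2 h₃)⟩

theorem falsum_elim : Γ ⊢ᴺᴶ .falsum → Γ ⊢ᴺᴶ C
  | ⟨d, h⟩ => ⟨.falsumE d, h⟩

theorem cut (hA : Γ ⊢ᴺᴶ A) (hC : insert A Γ ⊢ᴺᴶ C) : Γ ⊢ᴺᴶ C :=
  hC.imp_intro.imp_elim hA

theorem and_elim (hAB : Γ ⊢ᴺᴶ .and A B) (hC : insert A (insert B Γ) ⊢ᴺᴶ C) : Γ ⊢ᴺᴶ C :=
  hAB.and_right.cut ((hAB.and_left.mono (Set.subset_insert B Γ)).cut hC)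

end NJDerivable

namespace IDerivable

theorem of_mem (h : A ∈ Γ) : Γ ⊢ᴵ A :=
  ⟨.ass A, Set.singleton_subset_iff.2 h⟩

theorem insert_self : insert A Γ ⊢ᴵ A :=
  of_mem (Set.mem_insert A Γ)

theorem and_intro : Γ ⊢ᴵ A → Γ ⊢ᴵ B → insert (.and A B) Γ ⊢ᴵ C → Γ ⊢ᴵ C
  | ⟨d₁, h₁⟩, ⟨d₂, h₂⟩, ⟨d₃, h₃⟩ =>
    ⟨.andI d₁ d₂ d₃,
      Set.union_subset (Set.union_subset h₁ h₂) (Set.sdiff_singleton_subset_iff.2 h₃)⟩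

theorem imp_intro : insert A Γ ⊢ᴵ B → insert (.imp A B) Γ ⊢ᴵ C → Γ ⊢ᴵ C
  | ⟨d₁, h₁⟩, ⟨d₂, h₂⟩ =>
    ⟨.impI A d₁ d₂, Set.union_subset (Set.sdiff_singleton_subset_iff.2 h₁)
      (Set.sdiff_singleton_subset_iff.2 h₂)⟩

theorem or_intro_left : Γ ⊢ᴵ A → insert (.or A B) Γ ⊢ᴵ C → Γ ⊢ᴵ C
  | ⟨d₁, h₁⟩, ⟨d₂, h₂⟩ =>
    ⟨.orI₁ B d₁ d₂, Set.union_subset h₁ (Set.sdiff_singleton_subset_iff.2 h₂)⟩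

theorem or_intro_right : Γ ⊢ᴵ B → insert (.or A B) Γ ⊢ᴵ C → Γ ⊢ᴵ C
  | ⟨d₁, h₁⟩, ⟨d₂, h₂⟩ =>
    ⟨.orI₂ A d₁ d₂, Set.union_subset h₁ (Set.sdiff_singleton_subset_iff.2 h₂)⟩

theorem and_elim : Γ ⊢ᴵ .and A B → insert A (insert B Γ) ⊢ᴵ C → Γ ⊢ᴵ C
  | ⟨d₁, h₁⟩, ⟨d₂, h₂⟩ => ⟨.andE d₁ d₂, Set.union_subset h₁ (sdiff_pair_subset_iff.2 h₂)⟩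

theorem imp_elim : Γ ⊢ᴵ .imp A B → Γ ⊢ᴵ A → insert B Γ ⊢ᴵ C → Γ ⊢ᴵ C
  | ⟨d₁, h₁⟩, ⟨d₂, h₂⟩, ⟨d₃, h₃⟩ =>
    ⟨.impE d₁ d₂ d₃,
      Set.union_subset (Set.union_subset h₁ h₂) (Set.sdiff_singleton_subset_iff.2 h₃)⟩

theorem or_elim : Γ ⊢ᴵ .or A B → insert A Γ ⊢ᴵ C → insert B Γ ⊢ᴵ C → Γ ⊢ᴵ C
  | ⟨d₁, h₁⟩, ⟨d₂, h₂⟩, ⟨d₃, h₃⟩ =>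
    ⟨.orE d₁ d₂ d₃, Set.union_subset (Set.union_subset h₁ (Set.sdiff_singleton_subset_iff.2 h₂))
      (Set.sdiff_singleton_subset_iff.2 h₃)⟩

theorem falsum_elim : Γ ⊢ᴵ .falsum → Γ ⊢ᴵ C
  | ⟨d, h⟩ => ⟨.falsumE d, h⟩

end IDerivable

theorem Ded.njDerivable (d : Ded C) (h : hyps d ⊆ Γ) : Γ ⊢ᴺᴶ C := by
  induction d generalizing Γ <;>
    simp only [hyps, Set.union_subset_iff, Set.singleton_subset_iff,
      Set.sdiff_singleton_subset_iff, sdiff_pair_subset_iff] at h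
  case ass => exact .of_mem h
  case andI ihA ihB ihC =>
    obtain ⟨⟨hA, hB⟩, hC⟩ := h
    exact ((ihA hA).and_intro (ihB hB)).cut (ihC hC)
  case impI ihB ihC => exact (ihB h.1).imp_intro.cut (ihC h.2)
  case orI₁ ihA ihC => exact (ihA h.1).or_intro_left.cut (ihC h.2)
  case orI₂ ihB ihC => exact (ihB h.1).or_intro_right.cut (ihC h.2)
  case andE ihAB ihC => exact (ihAB h.1).and_elim (ihC h.2)
  case impE ihAB ihA ihC =>
    obtain ⟨⟨hAB, hA⟩, hC⟩ := h
    exact ((ihAB hAB).imp_elim (ihA hA)).cut (ihC hC)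
  case orE ihAB ihA ihB =>
    obtain ⟨⟨hAB, hA⟩, hB⟩ := h
    exact (ihAB hAB).or_elim (ihA hA) (ihB hB)
  case falsumE ih => exact (ih h).falsum_elim

theorem NJDed.iDerivable (d : NJDed C) (h : NJhyps d ⊆ Γ) : Γ ⊢ᴵ C := by
  induction d generalizing Γ <;>
    simp only [NJhyps, Set.union_subset_iff, Set.singleton_subset_iff,
      Set.sdiff_singleton_subset_iff] at h
  case ass => exact .of_mem h
  case andI ihA ihB => exact (ihA h.1).and_intro (ihB h.2) .insert_self
  case andE₁ ih => exact (ih h).and_elim .insert_self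
  case andE₂ ih => exact (ih h).and_elim (.of_mem (Set.mem_insert_of_mem _ (Set.mem_insert _ _)))
  case impI ih => exact (ih h).imp_intro .insert_self
  case impE ihAB ihA => exact (ihAB h.1).imp_elim (ihA h.2) .insert_self
  case orI₁ ih => exact (ih h).or_intro_left .insert_self
  case orI₂ ih => exact (ih h).or_intro_right .insert_self
  case orE ihAB ihA ihB =>
    obtain ⟨⟨hAB, hA⟩, hB⟩ := h
    exact (ihAB hAB).or_elim (ihA hA) (ihB hB)
  case falsumE ih => exact (ih h).falsum_elim

end Derivability

/-- **I is a formalisation of intuitionistic propositional logic**: for all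
sets of formulas `Γ` and formulas `A`, `Γ ⊢_I A` if and only if `Γ ⊢_NJ A`,
where NJ is Gentzen's natural deduction system for intuitionistic propositional
logic. -/
theorem system_I_equiv_NJ (Γ : Set Formula) (A : Formula) :
    (∃ d : Ded A, hyps d ⊆ Γ) ↔ (∃ d : NJDed A, NJhyps d ⊆ Γ) :=
  ⟨fun ⟨d, h⟩ => d.njDerivable h, fun ⟨d, h⟩ => d.iDerivable h⟩
end
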